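/- arXiv:2402.13285 — 6 statements merged into one kernel-verified Lean document; each statement's English description precedes it below -/
import Mathlib

section
/- Optimized Catoni form equals the inverse binary KL: For every q ∈ [0,1] and every τ > 0, the infimum over c > 0 of (1/(1−e^{−c}))·(1 − exp(−c·q − τ)) equals kl̄[q | τ], where kl̄[q | τ] = sup{ p ∈ (0,1) : kl(q‖p) ≤ τ }. -/
/-- The binary KL divergence `kl(q‖p) = q ln(q/p) + (1−q) ln((1−q)/(1−p))`
(with the conventions `0·ln 0 = 0`, which hold automatically since
`Real.log 0 = 0`). -/
noncomputable def binKL (q p : ℝ) : ℝ :=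
  q * Real.log (q / p) + (1 - q) * Real.log ((1 - q) / (1 - p))

theorem catoni_aux (q p c : ℝ) (hq : q ∈ Set.Icc (0:ℝ) 1) (hp0 : 0 < p) (hp1 : p < 1) :
    Real.exp (-(c * q) - binKL q p) ≤ 1 - p + p * Real.exp (-c) := by
  obtain ⟨h0, h1⟩ := hq
  have hec := Real.exp_pos (-c)
  have hp1' : 0 < 1 - p := by linarith
  rcases h0.eq_or_lt with rfl | h0
  · have : binKL 0 p = -Real.log (1 - p) := by simp [binKL]
    rw [this]
    simp only [mul_zero, neg_zero, zero_sub, neg_neg]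
    rw [Real.exp_log hp1']
    have := mul_pos hp0 hec
    linarith
  rcases h1.eq_or_lt with rfl | h1
  · have : binKL 1 p = -Real.log p := by simp [binKL]
    rw [this, mul_one, sub_neg_eq_add, Real.exp_add, Real.exp_log hp0]
    linarith
  have hq1' : 0 < 1 - q := by linarith
  have hA : 0 < p * Real.exp (-c) / q := by positivity
  have hB : 0 < (1 - p) / (1 - q) := by positivity
  have key := Real.geom_mean_le_arith_mean2_weighted h0.le hq1'.le hA.le hB.le (by ring)
  have e1 : q * (p * Real.exp (-c) / q) + (1 - q) * ((1 - p) / (1 - q))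
      = 1 - p + p * Real.exp (-c) := by
    field_simp
    ring
  rw [e1, Real.rpow_def_of_pos hA, Real.rpow_def_of_pos hB, ← Real.exp_add] at key
  convert key using 2
  unfold binKL
  rw [Real.log_div (by positivity) h0.ne', Real.log_mul hp0.ne' hec.ne', Real.log_exp,
    Real.log_div hp1'.ne' hq1'.ne', Real.log_div h0.ne' hp0.ne', Real.log_div hq1'.ne' hp1'.ne']
  ring

theorem catoni_le_iff (q τ c r : ℝ) (hc : 0 < c) :
    (1 / (1 - Real.exp (-c))) * (1 - Real.exp (-(c * q) - τ)) ≤ r ↔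
      1 - r + r * Real.exp (-c) ≤ Real.exp (-(c * q) - τ) := by
  have h : 0 < 1 - Real.exp (-c) := by
    have : Real.exp (-c) < 1 := Real.exp_lt_one_iff.2 (by linarith)
    linarith
  rw [one_div_mul_eq_div, div_le_iff₀ h]
  constructor <;> intro h <;> linarith

theorem le_catoni_iff (q τ c r : ℝ) (hc : 0 < c) :
    r ≤ (1 / (1 - Real.exp (-c))) * (1 - Real.exp (-(c * q) - τ)) ↔
      Real.exp (-(c * q) - τ) ≤ 1 - r + r * Real.exp (-c) := by
  have h : 0 < 1 - Real.exp (-c) := by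
    have : Real.exp (-c) < 1 := Real.exp_lt_one_iff.2 (by linarith)
    linarith
  rw [one_div_mul_eq_div, le_div_iff₀ h]
  constructor <;> intro h <;> linarith

/-- Existence of a good `c` for a level `r` strictly above the inverse KL. -/
theorem catoni_exists (q τ r : ℝ) (h0 : 0 ≤ q) (hqr : q < r) (hr1 : r < 1) (hτ : 0 < τ)
    (hk : τ < binKL q r) : ∃ c : ℝ, 0 < c ∧
      1 - r + r * Real.exp (-c) ≤ Real.exp (-(c * q) - τ) := by
  have hr0 : 0 < r := by linarith
  have hr1' : 0 < 1 - r := by linarith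
  have hq1' : 0 < 1 - q := by linarith
  rcases h0.eq_or_lt with rfl | h0
  · have hb : binKL 0 r = -Real.log (1 - r) := by simp [binKL]
    rw [hb] at hk
    have h2 : 1 - r < Real.exp (-τ) := by
      rw [← Real.log_lt_iff_lt_exp hr1']
      linarith
    have h3 : Real.exp (-τ) < 1 := Real.exp_lt_one_iff.2 (by linarith)
    have hx0 : 0 < (Real.exp (-τ) - (1 - r)) / r := div_pos (by linarith) hr0
    have hx1 : (Real.exp (-τ) - (1 - r)) / r < 1 := by
      rw [div_lt_one hr0]
      linarith
    refine ⟨-Real.log ((Real.exp (-τ) - (1 - r)) / r), ?_, ?_⟩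
    · have := Real.log_neg hx0 hx1
      linarith
    · rw [neg_neg, Real.exp_log hx0, mul_div_cancel₀ _ hr0.ne']
      simp
  · have hx0 : 0 < q * (1 - r) / (r * (1 - q)) := by positivity
    have hx1 : q * (1 - r) / (r * (1 - q)) < 1 := by
      rw [div_lt_one (by positivity)]
      nlinarith
    refine ⟨-Real.log (q * (1 - r) / (r * (1 - q))), ?_, ?_⟩
    · have := Real.log_neg hx0 hx1
      linarith
    · rw [neg_neg, Real.exp_log hx0]
      have e1 : 1 - r + r * (q * (1 - r) / (r * (1 - q))) = (1 - r) / (1 - q) := by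
        field_simp
        ring
      rw [e1, ← Real.log_le_iff_le_exp (by positivity)]
      unfold binKL at hk
      rw [Real.log_div h0.ne' hr0.ne', Real.log_div hq1'.ne' hr1'.ne'] at hk
      rw [Real.log_div hr1'.ne' hq1'.ne', Real.log_div (by positivity) (by positivity),
        Real.log_mul h0.ne' hr1'.ne', Real.log_mul hr0.ne' hq1'.ne']
      nlinarith

/-- **Optimized Catoni form equals the inverse binary KL.**  For every
`q ∈ [0,1]` and every `τ > 0`, the infimum over `c > 0` of
`(1/(1−e^{−c}))·(1 − exp(−c·q − τ))` equals
`kl̄[q|τ] = sup{ p ∈ (0,1) : kl(q‖p) ≤ τ }`. -/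
theorem catoni_infimum_eq_invBinKL
    (q τ : ℝ) (hq : q ∈ Set.Icc (0:ℝ) 1) (hτ : 0 < τ) :
    sInf ((fun c : ℝ =>
        (1 / (1 - Real.exp (-c))) * (1 - Real.exp (-(c * q) - τ))) ''
      Set.Ioi (0:ℝ)) =
    sSup {p : ℝ | p ∈ Set.Ioo (0:ℝ) 1 ∧ binKL q p ≤ τ} := by
  obtain ⟨h0, h1⟩ := hq
  set S := sSup {p : ℝ | p ∈ Set.Ioo (0:ℝ) 1 ∧ binKL q p ≤ τ} with hS
  have hbdd : BddAbove {p : ℝ | p ∈ Set.Ioo (0:ℝ) 1 ∧ binKL q p ≤ τ} :=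
    ⟨1, fun p hp => hp.1.2.le⟩
  have hmem : ∀ p, 0 < p → p < 1 → binKL q p ≤ τ → p ≤ S :=
    fun p a b c => le_csSup hbdd ⟨⟨a, b⟩, c⟩
  have hS0 : 0 ≤ S := Real.sSup_nonneg (fun p hp => hp.1.1.le)
  have hnn : ∀ c : ℝ, 0 < c →
      0 ≤ (1 / (1 - Real.exp (-c))) * (1 - Real.exp (-(c * q) - τ)) := by
    intro c hc
    rw [le_catoni_iff q τ c 0 hc]
    have : Real.exp (-(c * q) - τ) ≤ 1 := by
      rw [Real.exp_le_one_iff]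
      nlinarith [mul_nonneg hc.le h0]
    linarith
  have hinf : ∀ c r : ℝ, 0 < c → 1 - r + r * Real.exp (-c) ≤ Real.exp (-(c * q) - τ) →
      sInf ((fun c : ℝ => (1 / (1 - Real.exp (-c))) * (1 - Real.exp (-(c * q) - τ))) ''
        Set.Ioi (0:ℝ)) ≤ r := by
    intro c r hc h
    refine (csInf_le ?_ (Set.mem_image_of_mem _ (Set.mem_Ioi.2 hc))).trans ((catoni_le_iff q τ c r hc).2 h)
    refine ⟨0, ?_⟩
    rintro _ ⟨c, hc, rfl⟩
    exact hnn c hc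
  apply le_antisymm
  · have key1 : ∀ r, S < r → r < 1 → sInf ((fun c : ℝ =>
        (1 / (1 - Real.exp (-c))) * (1 - Real.exp (-(c * q) - τ))) ''
        Set.Ioi (0:ℝ)) ≤ r := by
      intro r hr hr1
      have hr0 : 0 < r := by linarith
      have hk : τ < binKL q r := by
        by_contra hcon
        have := hmem r hr0 hr1 (not_lt.1 hcon)
        linarith
      have hqr : q < r := by
        rcases h0.eq_or_lt with rfl | h0
        · exact hr0
        rcases h1.eq_or_lt with rfl | h1
        · exfalso
          have hm1 : max r (Real.exp (-τ)) < 1 :=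
            max_lt hr1 (Real.exp_lt_one_iff.2 (by linarith))
          have hm0 : 0 < max r (Real.exp (-τ)) := lt_max_of_lt_left hr0
          have hb : binKL 1 (max r (Real.exp (-τ))) = -Real.log (max r (Real.exp (-τ))) := by
            simp [binKL]
          have := hmem _ hm0 hm1 (by
            rw [hb, neg_le, Real.le_log_iff_exp_le hm0]
            exact le_max_right _ _)
          have := le_max_left r (Real.exp (-τ))
          linarith
        · have hq1' : 1 - q ≠ 0 := by linarith
          have := hmem q h0 h1 (by
            simp [binKL, div_self h0.ne', div_self hq1', hτ.le])
          linarith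
      obtain ⟨c, hc, h⟩ := catoni_exists q τ r h0 hqr hr1 hτ hk
      exact hinf c r hc h
    have key2 : sInf ((fun c : ℝ =>
        (1 / (1 - Real.exp (-c))) * (1 - Real.exp (-(c * q) - τ))) ''
        Set.Ioi (0:ℝ)) ≤ 1 := by
      apply le_of_forall_gt_imp_ge_of_dense
      intro r hr
      have hr0 : 0 < r := by linarith
      have hx0 : 0 < (r - 1) / r := div_pos (by linarith) hr0
      have hx1 : (r - 1) / r < 1 := by
        rw [div_lt_one hr0]
        linarith
      refine hinf (-Real.log ((r - 1) / r)) r ?_ ?_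
      · have := Real.log_neg hx0 hx1
        linarith
      · rw [neg_neg, Real.exp_log hx0, mul_div_cancel₀ _ hr0.ne']
        have := Real.exp_pos (-(-Real.log ((r - 1) / r) * q) - τ)
        linarith
    apply le_of_forall_gt_imp_ge_of_dense
    intro r hr
    rcases lt_or_ge r 1 with h | h
    · exact key1 r hr h
    · exact key2.trans h
  · apply le_csInf (Set.Nonempty.image _ ⟨1, one_pos⟩)
    rintro _ ⟨c, hc, rfl⟩
    refine Real.sSup_le ?_ (hnn c hc)
    rintro p ⟨⟨hp0, hp1⟩, hk⟩
    refine (le_catoni_iff q τ c p hc).2 (le_trans ?_ (catoni_aux q p c ⟨h0, h1⟩ hp0 hp1))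
    exact Real.exp_le_exp.2 (by linarith)
end

section
/- Pointwise bound on the disintegrated KL between two Gibbs densities: Let μ : H × Z^m → ℝ and ω : H → ℝ be measurable with finite positive Gibbs normalizers, and let Q_S have density proportional to e^{−μ(h,S)} and P have density proportional to e^{−ω(h)} with respect to λ. Then for every S ∈ Z^m and every h ∈ H, ln₊( Q_S(h)/P(h) ) ≤ [ ω(h) − μ(h,S) ]₊ + [ E_{h′∼P}( μ(h′,S) − ω(h′) ) ]₊, provided μ(·,S) − ω is P-integrable. -/
open MeasureTheory

/-- **Pointwise bound on the disintegrated KL between two Gibbs densities.**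
With `Q_S` having density `e^{−μ(h,S)}/Z_S` and the prior `P` having density
`e^{−ω(h)}/Z_ω` w.r.t. `lam`, for every sample `S` and hypothesis `h`,
`ln₊(Q_S(h)/P(h)) ≤ [ω(h) − μ(h,S)]₊ + [E_{h′∼P}(μ(h′,S) − ω(h′))]₊`,
provided `μ(·,S) − ω` is `P`-integrable. -/
theorem gibbs_log_ratio_pointwise_bound
    {Z H : Type*} [MeasurableSpace Z] [MeasurableSpace H]
    (m : ℕ) (hm : 0 < m)
    (lam : Measure H) [SigmaFinite lam]
    (μ : H → (Fin m → Z) → ℝ) (hμ : Measurable (Function.uncurry μ))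
    (hμint : ∀ S : Fin m → Z, Integrable (fun g => Real.exp (-(μ g S))) lam)
    (hZpos : ∀ S : Fin m → Z, 0 < ∫ g, Real.exp (-(μ g S)) ∂lam)
    (ω : H → ℝ) (hω : Measurable ω)
    (hωint : Integrable (fun g => Real.exp (-(ω g))) lam)
    (hωpos : 0 < ∫ g, Real.exp (-(ω g)) ∂lam)
    (Pm : Measure H)
    (hPm : Pm = lam.withDensity fun h =>
      ENNReal.ofReal (Real.exp (-(ω h)) / ∫ g, Real.exp (-(ω g)) ∂lam))
    (S : Fin m → Z) (h : H)
    (hint : Integrable (fun h' => μ h' S - ω h') Pm) :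
    max (Real.log
        ((Real.exp (-(μ h S)) / ∫ g, Real.exp (-(μ g S)) ∂lam) /
          (Real.exp (-(ω h)) / ∫ g, Real.exp (-(ω g)) ∂lam))) 0 ≤
      max (ω h - μ h S) 0 + max (∫ h', (μ h' S - ω h') ∂Pm) 0 := by
  set Zm := ∫ g, Real.exp (-(μ g S)) ∂lam with hZm
  set Zw := ∫ g, Real.exp (-(ω g)) ∂lam with hZw
  have hZmpos : 0 < Zm := hZpos S
  have hdm : Measurable fun h => ENNReal.ofReal (Real.exp (-(ω h)) / Zw) := by fun_prop
  have hdlt : ∀ᵐ h ∂lam, ENNReal.ofReal (Real.exp (-(ω h)) / Zw) < ⊤ :=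
    Filter.Eventually.of_forall fun _ => ENNReal.ofReal_lt_top
  have hreal : ∀ g, (ENNReal.ofReal (Real.exp (-(ω g)) / Zw)).toReal
      = Real.exp (-(ω g)) / Zw := fun g => ENNReal.toReal_ofReal (by positivity)
  have hprob : IsProbabilityMeasure Pm := by
    constructor
    rw [hPm, withDensity_apply _ MeasurableSet.univ, Measure.restrict_univ,
      ← ofReal_integral_eq_lintegral_ofReal (hωint.div_const _)
        (Filter.Eventually.of_forall fun g => by positivity),
      integral_div, ← hZw, div_self hωpos.ne', ENNReal.ofReal_one]
  have hmul : ∀ g, Real.exp (-(ω g)) / Zw * Real.exp (-(μ g S - ω g))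
      = Real.exp (-(μ g S)) / Zw := by
    intro g
    rw [div_mul_eq_mul_div, ← Real.exp_add]
    congr 2
    ring
  have hexpint : Integrable (fun g => Real.exp (-(μ g S - ω g))) Pm := by
    rw [hPm, integrable_withDensity_iff_integrable_smul' hdm hdlt]
    simp only [hreal, smul_eq_mul, hmul]
    exact (hμint S).div_const _
  have hexpval : ∫ g, Real.exp (-(μ g S - ω g)) ∂Pm = Zm / Zw := by
    rw [hPm, integral_withDensity_eq_integral_toReal_smul hdm hdlt]
    simp only [hreal, smul_eq_mul, hmul]
    rw [integral_div]
  have hJ : Real.exp (∫ g, -(μ g S - ω g) ∂Pm) ≤ ∫ g, Real.exp (-(μ g S - ω g)) ∂Pm :=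
    convexOn_exp.map_integral_le Real.continuous_exp.continuousOn isClosed_univ
      (Filter.Eventually.of_forall fun _ => Set.mem_univ _) hint.neg hexpint
  rw [hexpval, integral_neg, ← Real.le_log_iff_exp_le (by positivity),
    Real.log_div hZmpos.ne' hωpos.ne'] at hJ
  rw [Real.log_div (by positivity) (by positivity), Real.log_div (by positivity) (by positivity),
    Real.log_div (by positivity) (by positivity), Real.log_exp, Real.log_exp]
  have h1 := le_max_left (ω h - μ h S) 0
  have h2 := le_max_left (∫ h', (μ h' S - ω h') ∂Pm) 0
  have h3 := le_max_right (ω h - μ h S) 0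
  have h4 := le_max_right (∫ h', (μ h' S - ω h') ∂Pm) 0
  exact max_le (by linarith) (by linarith)
end

section
/- Disintegrated bound with an ε-differentially private prior mechanism: Let S ↦ P_S be an ε-differentially private randomized mechanism on H. For any probability measure D on Z, any measurable φ : H × Z^m → ℝ, any posterior Markov kernel S ↦ Q_S with strictly positive densities, and any δ ∈ (0,1], with probability at least 1−δ over S′ ∼ D^m, S ∼ D^m, and h ∼ Q_S (these independent in the stated product/kernel sense) one has φ(h,S) ≤ ln(Q_S(h)/P_S(h)) + m·ε + ln[(1/δ)·E_{V∼D^m} E_{g∼P_{S′}} e^{φ(g,V)}]. -/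
open MeasureTheory ProbabilityTheory

/-- Lower-integral change of density, valid for non-measurable `f`. -/
lemma lower_density_le {H : Type*} [MeasurableSpace H] (lam : Measure H)
    (f : H → ENNReal) (g : H → ENNReal) (hg : Measurable g) (hg0 : ∀ h, g h ≠ 0)
    (hgt : ∀ h, g h ≠ ⊤) (B : Set H) (hB : MeasurableSet B) :
    ∫⁻ h in B, f h * g h ∂lam ≤ ∫⁻ h in B, g h ∂(lam.withDensity f) := by
  obtain ⟨k, hk, hkle, hkeq⟩ :=
    exists_measurable_le_lintegral_eq (lam.restrict B) (fun h => f h * g h)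
  rw [hkeq]
  have hm : Measurable (fun h => k h / g h) := hk.div hg
  have h1 : ∫⁻ h in B, k h ∂lam = ∫⁻ h in B, g h ∂(lam.withDensity fun h => k h / g h) := by
    rw [setLIntegral_withDensity_eq_setLIntegral_mul lam hm hg hB]
    refine lintegral_congr fun h => ?_
    simp only [Pi.mul_apply]
    rw [ENNReal.div_mul_cancel (hg0 h) (hgt h)]
  rw [h1]
  refine lintegral_mono' (Measure.restrict_mono le_rfl ?_) le_rfl
  refine withDensity_mono (Filter.Eventually.of_forall fun h => ?_)
  exact ENNReal.div_le_of_le_mul (hkle h)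

/-- One-coordinate change of the private mechanism. -/
lemma dp_step {H : Type*} [MeasurableSpace H] (lam : Measure H) (p q : H → ℝ)
    (hq : ∀ h, 0 < q h) (μ ν : Measure H)
    (hμ : μ = lam.withDensity fun h => ENNReal.ofReal (p h))
    (hν : ν = lam.withDensity fun h => ENNReal.ofReal (q h)) (ε : ℝ)
    (h : essSup (fun h => ENNReal.ofReal (p h / q h)) μ ≤ ENNReal.ofReal (Real.exp ε)) :
    μ ≤ ENNReal.ofReal (Real.exp ε) • ν := by
  have hae : ∀ᵐ x ∂μ, ENNReal.ofReal (p x / q x) ≤ ENNReal.ofReal (Real.exp ε) :=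
    (ENNReal.ae_le_essSup _).mono fun x hx => hx.trans h
  set N := toMeasurable μ {x | ¬ ENNReal.ofReal (p x / q x) ≤ ENNReal.ofReal (Real.exp ε)} with hN
  have hN0 : μ N = 0 := by rw [hN, measure_toMeasurable]; exact hae
  have hNm : MeasurableSet N := measurableSet_toMeasurable _ _
  refine Measure.le_iff.2 fun s hs => ?_
  have hsN : MeasurableSet (s \ N) := hs.diff hNm
  calc μ s = μ (s \ N) := (measure_sdiff_null hN0).symm
    _ = ∫⁻ x in s \ N, ENNReal.ofReal (p x) ∂lam := by rw [hμ, withDensity_apply _ hsN]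
    _ ≤ ∫⁻ x in s \ N, ENNReal.ofReal (Real.exp ε) * ENNReal.ofReal (q x) ∂lam := by
        refine setLIntegral_mono' hsN fun x hx => ?_
        have hx' : ENNReal.ofReal (p x / q x) ≤ ENNReal.ofReal (Real.exp ε) := by
          by_contra hc
          exact hx.2 (subset_toMeasurable _ _ hc)
        rw [ENNReal.ofReal_le_ofReal_iff (Real.exp_pos _).le, div_le_iff₀ (hq x)] at hx'
        rw [← ENNReal.ofReal_mul (Real.exp_pos _).le]
        exact ENNReal.ofReal_le_ofReal hx'
    _ = ENNReal.ofReal (Real.exp ε) * ν (s \ N) := by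
        rw [lintegral_const_mul' _ _ ENNReal.ofReal_ne_top, hν, withDensity_apply _ hsN]
    _ ≤ (ENNReal.ofReal (Real.exp ε) • ν) s := by
        rw [Measure.smul_apply, smul_eq_mul]
        gcongr
        exact Set.sdiff_subset

/-- Changing all `m` coordinates. -/
lemma dp_chain {Z H : Type*} [MeasurableSpace H] (m : ℕ)
    (κ : (Fin m → Z) → Measure H) (c : ENNReal)
    (hstep : ∀ T T' : Fin m → Z, (∃ j : Fin m, ∀ i, i ≠ j → T i = T' i) → κ T' ≤ c • κ T)
    (S S' : Fin m → Z) : κ S ≤ c ^ m • κ S' := by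
  have key : ∀ k, k ≤ m →
      κ (fun i : Fin m => if i.val < k then S i else S' i) ≤ c ^ k • κ S' := by
    intro k
    induction k with
    | zero => intro _; simp
    | succ k ih =>
      intro hk
      have h1 := ih (by omega)
      have h2 := hstep (fun i : Fin m => if i.val < k then S i else S' i)
        (fun i : Fin m => if i.val < k + 1 then S i else S' i) ⟨⟨k, by omega⟩, fun i hi => by
          have : i.val ≠ k := fun h => hi (Fin.ext h)
          by_cases h : i.val < k
          · simp [h, show i.val < k + 1 by omega]
          · simp [h, show ¬ i.val < k + 1 by omega]⟩
      refine Measure.le_iff.2 fun s hs => ?_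
      have h1' := Measure.le_iff'.1 h1 s
      have h2' := Measure.le_iff'.1 h2 s
      simp only [Measure.smul_apply, smul_eq_mul] at h1' h2' ⊢
      calc _ ≤ _ := h2'
        _ ≤ c * (c ^ k * κ S' s) := by gcongr
        _ = _ := by ring
  have := key m le_rfl
  simpa using this

/-- The pointwise inequality on the bad event. -/
lemma bad_pointwise (f q p a δ : ℝ) (C : ENNReal) (hq : 0 < q) (hp : 0 < p) (hδ : 0 < δ)
    (hC : C ≠ 0)
    (h : ¬ ((f : EReal) ≤ (Real.log (q / p) : EReal) + (a : EReal)
      + ENNReal.log (ENNReal.ofReal (1/δ) * C))) :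
    C ≠ ⊤ ∧ ENNReal.ofReal q ≤ ENNReal.ofReal p *
      ENNReal.ofReal (Real.exp f) * (ENNReal.ofReal (Real.exp (-a)) * ENNReal.ofReal δ / C) := by
  have hCt : C ≠ ⊤ := by
    rintro rfl
    apply h
    rw [ENNReal.mul_top (by simpa using hδ), ENNReal.log_top, ← EReal.coe_add,
      EReal.coe_add_top]
    exact le_top
  refine ⟨hCt, ?_⟩
  obtain ⟨c, rfl⟩ : ∃ c : ℝ, C = ENNReal.ofReal c := ⟨C.toReal, (ENNReal.ofReal_toReal hCt).symm⟩
  have hc : 0 < c := by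
    by_contra hh
    exact hC (ENNReal.ofReal_of_nonpos (not_lt.1 hh))
  have hdc : 0 < 1 / δ * c := by positivity
  rw [← ENNReal.ofReal_mul (by positivity), ENNReal.log_ofReal_of_pos hdc, ← EReal.coe_add,
    ← EReal.coe_add, EReal.coe_le_coe_iff, not_le] at h
  have h2 := Real.exp_lt_exp.2 h
  rw [Real.exp_add, Real.exp_add, Real.exp_log (by positivity), Real.exp_log hdc] at h2
  rw [← ENNReal.ofReal_mul (Real.exp_pos _).le, ← ENNReal.ofReal_div_of_pos hc,
    ← ENNReal.ofReal_mul hp.le, ← ENNReal.ofReal_mul (by positivity)]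
  apply ENNReal.ofReal_le_ofReal
  have hE : Real.exp (-a) * Real.exp a = 1 := by rw [← Real.exp_add]; simp
  calc q = p * (q / p * Real.exp a * (1 / δ * c)) * (Real.exp (-a) * δ / c) := by
        field_simp
        linear_combination (-1 : ℝ) * hE
    _ ≤ _ := by gcongr

/-- **Disintegrated bound with an ε-differentially private prior mechanism.**
`S ↦ P_S` is an ε-differentially private randomized mechanism on `H` (for any
two samples differing in exactly one coordinate, the essential supremum of the
density ratio is at most `e^ε`).  With probability at least `1−δ` over
`S′ ∼ D^m`, `S ∼ D^m` and `h ∼ Q_S`,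
`φ(h,S) ≤ ln(Q_S(h)/P_S(h)) + m·ε
  + ln[(1/δ)·E_{V∼D^m} E_{g∼P_{S′}} e^{φ(g,V)}]`
(stated in `EReal` so that it is trivially true when the expectation is
infinite). -/
theorem disintegrated_bound_with_dp_prior
    {Z H : Type*} [MeasurableSpace Z] [MeasurableSpace H]
    (m : ℕ) (hm : 0 < m)
    (D : Measure Z) [IsProbabilityMeasure D]
    (lam : Measure H) [SigmaFinite lam]
    -- the randomized prior mechanism, with strictly positive densities
    (Pd : (Fin m → Z) → H → ℝ) (hPdpos : ∀ S h, 0 < Pd S h)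
    (κP : Kernel (Fin m → Z) H) [IsMarkovKernel κP]
    (hκP : ∀ S, κP S = lam.withDensity fun h => ENNReal.ofReal (Pd S h))
    (ε : ℝ) (hε : 0 ≤ ε)
    -- ε-differential privacy of the mechanism
    (hDP : ∀ T T' : Fin m → Z, (∃ j : Fin m, ∀ i, i ≠ j → T i = T' i) →
      essSup (fun h => ENNReal.ofReal (Pd T' h / Pd T h)) (κP T') ≤
        ENNReal.ofReal (Real.exp ε))
    -- the posterior Markov kernel with strictly positive densities
    (Q : (Fin m → Z) → H → ℝ) (hQpos : ∀ S h, 0 < Q S h)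
    (κQ : Kernel (Fin m → Z) H) [IsMarkovKernel κQ]
    (hκQ : ∀ S, κQ S = lam.withDensity fun h => ENNReal.ofReal (Q S h))
    (φ : H → (Fin m → Z) → ℝ) (hφ : Measurable (Function.uncurry φ))
    (δ : ℝ) (hδ : δ ∈ Set.Ioc (0:ℝ) 1) :
    1 - ENNReal.ofReal δ ≤
      ((Measure.pi (fun _ : Fin m => D)).prod
          (Measure.pi (fun _ : Fin m => D) ⊗ₘ κQ))
        {p : (Fin m → Z) × ((Fin m → Z) × H) |
          (φ p.2.2 p.2.1 : EReal) ≤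
            (Real.log (Q p.2.1 p.2.2 / Pd p.2.1 p.2.2) : EReal)
            + ((m * ε : ℝ) : EReal)
            + ENNReal.log (ENNReal.ofReal (1/δ) *
                ∫⁻ V, ∫⁻ g, ENNReal.ofReal (Real.exp (φ g V)) ∂(κP p.1)
                  ∂(Measure.pi (fun _ : Fin m => D))) } := by
  classical
  obtain ⟨hδ0, hδ1⟩ := hδ
  set π : Measure (Fin m → Z) := Measure.pi (fun _ : Fin m => D) with hπ
  set C : (Fin m → Z) → ENNReal := fun S' =>
    ∫⁻ V, ∫⁻ g, ENNReal.ofReal (Real.exp (φ g V)) ∂(κP S') ∂π with hCdef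
  set G : Set ((Fin m → Z) × ((Fin m → Z) × H)) := {p |
          (φ p.2.2 p.2.1 : EReal) ≤
            (Real.log (Q p.2.1 p.2.2 / Pd p.2.1 p.2.2) : EReal)
            + ((m * ε : ℝ) : EReal)
            + ENNReal.log (ENNReal.ofReal (1/δ) *
                ∫⁻ V, ∫⁻ g, ENNReal.ofReal (Real.exp (φ g V)) ∂(κP p.1) ∂π) } with hG
  set E : (Fin m → Z) → H → ENNReal := fun S h => ENNReal.ofReal (Real.exp (φ h S)) with hE
  have hEm : ∀ S, Measurable (E S) := fun S =>
    (Real.measurable_exp.comp (hφ.comp (measurable_id.prodMk measurable_const))).ennreal_ofReal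
  have hE0 : ∀ S h, E S h ≠ 0 := fun S h => by
    simp only [hE, ne_eq, ENNReal.ofReal_eq_zero, not_le]; exact Real.exp_pos _
  have hchain : ∀ S S', κP S ≤ ENNReal.ofReal (Real.exp ε) ^ m • κP S' :=
    dp_chain m (fun S => κP S) _ fun T T' hT =>
      dp_step lam (Pd T') (Pd T) (hPdpos T) _ _ (hκP T') (hκP T) ε (hDP T T' hT)
  have hExpm : ENNReal.ofReal (Real.exp ε) ^ m = ENNReal.ofReal (Real.exp (m * ε)) := by
    rw [← ENNReal.ofReal_pow (Real.exp_pos _).le, ← Real.exp_nat_mul]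
  have hC0 : ∀ S', C S' ≠ 0 := by
    intro S' h0
    have hmeas : Measurable fun V => ∫⁻ g, ENNReal.ofReal (Real.exp (φ g V)) ∂(κP S') := by
      refine Measurable.lintegral_prod_right' (f := fun p : (Fin m → Z) × H =>
        ENNReal.ofReal (Real.exp (φ p.2 p.1))) ?_
      exact (Real.measurable_exp.comp (hφ.comp measurable_swap)).ennreal_ofReal
    rw [hCdef] at h0
    simp only at h0
    rw [lintegral_eq_zero_iff hmeas] at h0
    obtain ⟨V, hV⟩ := h0.exists
    simp only [Pi.zero_apply] at hV
    rw [lintegral_eq_zero_iff (hEm V)] at hV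
    obtain ⟨g, hg⟩ := hV.exists
    exact hE0 V g hg
  set M := toMeasurable (π.prod (π ⊗ₘ κQ)) G with hM
  have hMm : MeasurableSet M := measurableSet_toMeasurable _ _
  have hGM : G ⊆ M := subset_toMeasurable _ _
  rw [← measure_toMeasurable G, ← hM]
  suffices hbad : (π.prod (π ⊗ₘ κQ)) Mᶜ ≤ ENNReal.ofReal δ by
    have h1 : (π.prod (π ⊗ₘ κQ)) M + (π.prod (π ⊗ₘ κQ)) Mᶜ = 1 := prob_add_prob_compl hMm
    rw [tsub_le_iff_right, ← h1]
    gcongr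
  -- slicewise bound
  have hslice : ∀ S' S, κQ S (Prod.mk S ⁻¹' (Prod.mk S' ⁻¹' Mᶜ)) ≤
      (∫⁻ g, E S g ∂(κP S')) * (ENNReal.ofReal δ / C S') := by
    intro S' S
    set B : Set H := Prod.mk S ⁻¹' (Prod.mk S' ⁻¹' Mᶜ) with hB
    have hBm : MeasurableSet B :=
      measurable_prodMk_left (measurable_prodMk_left hMm.compl)
    have hpt : ∀ h ∈ B, C S' ≠ ⊤ ∧ ENNReal.ofReal (Q S h) ≤ ENNReal.ofReal (Pd S h) * E S h *
        (ENNReal.ofReal (Real.exp (-(m * ε))) * ENNReal.ofReal δ / C S') := by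
      intro h hh
      refine bad_pointwise _ _ _ _ _ _ (hQpos S h) (hPdpos S h) hδ0 (hC0 S') ?_
      intro hgood
      exact hh (hGM (show (S', (S, h)) ∈ G from hgood))
    rcases Set.eq_empty_or_nonempty B with hBe | ⟨h0, hh0⟩
    · rw [hBe]; simp
    have hCt : C S' ≠ ⊤ := (hpt h0 hh0).1
    set K := ENNReal.ofReal (Real.exp (-(m * ε))) * ENNReal.ofReal δ / C S' with hK
    have hKt : K ≠ ⊤ := ENNReal.div_ne_top (by finiteness) (hC0 S')
    calc κQ S B = ∫⁻ h in B, ENNReal.ofReal (Q S h) ∂lam := by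
          rw [hκQ S, withDensity_apply _ hBm]
      _ ≤ ∫⁻ h in B, ENNReal.ofReal (Pd S h) * E S h * K ∂lam :=
          setLIntegral_mono' hBm fun h hh => (hpt h hh).2
      _ = (∫⁻ h in B, ENNReal.ofReal (Pd S h) * E S h ∂lam) * K :=
          lintegral_mul_const' _ _ hKt
      _ ≤ (∫⁻ h in B, E S h ∂(κP S)) * K := by
          refine mul_le_mul_left ?_ K
          rw [hκP S]
          exact lower_density_le lam _ _ (hEm S) (hE0 S) (fun _ => ENNReal.ofReal_ne_top) B hBm
      _ ≤ (∫⁻ h, E S h ∂(κP S)) * K := by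
          gcongr
          exact Measure.restrict_le_self
      _ ≤ (∫⁻ h, E S h ∂(ENNReal.ofReal (Real.exp (m * ε)) • κP S')) * K := by
          gcongr
          exact hExpm ▸ hchain S S'
      _ = (∫⁻ h, E S h ∂(κP S')) * (ENNReal.ofReal δ / C S') := by
          rw [lintegral_smul_measure, smul_eq_mul, hK]
          have he : ENNReal.ofReal (Real.exp (m * ε)) * ENNReal.ofReal (Real.exp (-(m * ε))) = 1 := by
            rw [← ENNReal.ofReal_mul (Real.exp_pos _).le, ← Real.exp_add]; simp
          rw [mul_div_assoc]
          calc _ = (ENNReal.ofReal (Real.exp (m * ε)) * ENNReal.ofReal (Real.exp (-(m * ε)))) *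
                ((∫⁻ h, E S h ∂(κP S')) * (ENNReal.ofReal δ / C S')) := by ring
            _ = _ := by rw [he, one_mul]
  rw [Measure.prod_apply hMm.compl]
  calc ∫⁻ S', (π ⊗ₘ κQ) (Prod.mk S' ⁻¹' Mᶜ) ∂π ≤ ∫⁻ _, ENNReal.ofReal δ ∂π := by
        refine lintegral_mono fun S' => ?_
        rw [Measure.compProd_apply (measurable_prodMk_left hMm.compl)]
        by_cases hCt : C S' = ⊤
        · refine (lintegral_mono (hslice S')).trans ?_
          simp [hCt]
        · refine (lintegral_mono (hslice S')).trans ?_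
          rw [lintegral_mul_const' _ _ (ENNReal.div_ne_top ENNReal.ofReal_ne_top (hC0 S'))]
          exact ENNReal.mul_div_le
    _ = ENNReal.ofReal δ := by simp
end

section
/- Dziugaite–Roy-type bound for Gibbs posterior and Gibbs data-dependent prior: Let ℓ : H × Z → [0,1] and ℓ′ : H × Z → [0,1] be measurable losses and α, α′ ≥ 0. Define the posterior Q_S with density proportional to exp(−α·R_S^{ℓ′}(h)) and the data-dependent prior P_S with density proportional to exp(−α′·R_S^{ℓ′}(h)) (with respect to λ, normalizers finite and positive). Then for any probability measure D on Z and any δ ∈ (0,1], with probability at least 1−δ over S′ ∼ D^m, S ∼ D^m, h′ ∼ P_S, and h ∼ Q_S one has kl(R_S^ℓ(h) ‖ R_D^ℓ(h)) ≤ (1/m)·[ α·(R_S^{ℓ′}(h′) − R_S^{ℓ′}(h)) + α′·(R_S^{ℓ′}(h) − R_S^{ℓ′}(h′)) + 2α′ + ln(8√m/δ²) ]. -/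
open MeasureTheory ProbabilityTheory

/-- The true risk `R_D^ℓ(h) = E_{z∼D} ℓ(h,z)`. -/
noncomputable def trueRisk {H Z : Type*} [MeasurableSpace Z]
    (D : Measure Z) (ℓ : H → Z → ℝ) (h : H) : ℝ :=
  ∫ z, ℓ h z ∂D

/-- The empirical risk `R_S^ℓ(h) = (1/m) Σ_{i=1}^m ℓ(h,z_i)`. -/
noncomputable def empRisk {H Z : Type*} {m : ℕ}
    (ℓ : H → Z → ℝ) (h : H) (S : Fin m → Z) : ℝ :=
  (∑ i, ℓ h (S i)) / m

lemma fact_upper (m : ℕ) (hm : 0 < m) :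
    (m.factorial : ℝ) ≤ Real.exp 1 * Real.sqrt m * (m / Real.exp 1) ^ m := by
  obtain ⟨n, rfl⟩ : ∃ n, m = n + 1 := ⟨m - 1, by omega⟩
  have h := Stirling.stirlingSeq'_antitone (Nat.zero_le n)
  simp only [Function.comp, Nat.succ_eq_add_one, zero_add, Stirling.stirlingSeq_one] at h
  unfold Stirling.stirlingSeq at h
  have h2 : (0:ℝ) < Real.sqrt (2 * ((n+1 : ℕ):ℝ)) * (((n+1 : ℕ):ℝ) / Real.exp 1) ^ (n+1) := by
    positivity
  rw [div_le_iff₀ h2] at h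
  refine h.trans_eq ?_
  rw [Real.sqrt_mul (by norm_num)]
  have : Real.sqrt 2 ≠ 0 := by positivity
  field_simp

lemma sum_inv_sqrt (n : ℕ) :
    ∑ j ∈ Finset.range n, 1 / Real.sqrt ((j + 1 : ℕ) : ℝ) ≤ 2 * Real.sqrt n := by
  induction n with
  | zero => simp
  | succ n ih =>
    rw [Finset.sum_range_succ]
    have h1 : 0 ≤ Real.sqrt n := Real.sqrt_nonneg _
    have h2 : 0 < Real.sqrt ((n+1 : ℕ):ℝ) := by positivity
    have e1 : Real.sqrt n ^ 2 = n := Real.sq_sqrt (by positivity)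
    have e2 : Real.sqrt ((n+1 : ℕ):ℝ) ^ 2 = n + 1 := by
      rw [Real.sq_sqrt (by positivity)]; push_cast; ring
    have : 1 / Real.sqrt ((n+1 : ℕ):ℝ) ≤ 2 * Real.sqrt ((n+1 : ℕ):ℝ) - 2 * Real.sqrt n := by
      rw [div_le_iff₀ h2]
      nlinarith [sq_nonneg (Real.sqrt ((n+1 : ℕ):ℝ) - Real.sqrt n)]
    linarith

lemma binom_term (a b : ℕ) (ha : 0 < a) (hb : 0 < b) :
    ((a + b).choose a : ℝ) * ((a:ℝ) / (a + b : ℕ)) ^ a * ((b:ℝ) / (a + b : ℕ)) ^ b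
      ≤ (1/2) * (1 / Real.sqrt a + 1 / Real.sqrt b) := by
  have hA := Stirling.le_factorial_stirling a
  have hB := Stirling.le_factorial_stirling b
  have hM := fact_upper (a + b) (by omega)
  have hC : (((a + b).choose a : ℝ)) * a.factorial * b.factorial = (a+b).factorial := by
    rw [Nat.choose_symm_add]
    exact_mod_cast Nat.add_choose_mul_factorial_mul_factorial a b
  set C : ℝ := ((a + b).choose a : ℝ) with hCdef
  have hC0 : 0 ≤ C := by positivity
  set E := Real.exp 1 with hE
  have hE0 : 0 < E := Real.exp_pos 1
  set sa := Real.sqrt a with hsa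
  set sb := Real.sqrt b with hsb
  have hsa0 : 0 < sa := by positivity
  have hsb0 : 0 < sb := by positivity
  have ea : sa ^ 2 = a := Real.sq_sqrt (by positivity)
  have eb : sb ^ 2 = b := Real.sq_sqrt (by positivity)
  have hsm : Real.sqrt ((a + b : ℕ) : ℝ) ≤ sa + sb := by
    rw [Real.sqrt_le_left (by positivity)]
    push_cast
    nlinarith [mul_pos hsa0 hsb0]
  have r1 : Real.sqrt (2 * Real.pi * a) = Real.sqrt (2 * Real.pi) * sa := by
    rw [Real.sqrt_mul (by positivity)]
  have r2 : Real.sqrt (2 * Real.pi * b) = Real.sqrt (2 * Real.pi) * sb := by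
    rw [Real.sqrt_mul (by positivity)]
  rw [r1] at hA
  rw [r2] at hB
  have hpi : Real.sqrt (2 * Real.pi) * Real.sqrt (2 * Real.pi) = 2 * Real.pi :=
    Real.mul_self_sqrt (by positivity)
  have hprod : C * ((Real.sqrt (2 * Real.pi) * sa * (a / E) ^ a) *
      (Real.sqrt (2 * Real.pi) * sb * (b / E) ^ b)) ≤
      E * (sa + sb) * (((a + b : ℕ) : ℝ) / E) ^ (a + b) := by
    calc _ ≤ C * ((a.factorial : ℝ) * b.factorial) := by gcongr
      _ = (a+b).factorial := by rw [← hC]; ring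
      _ ≤ _ := hM
      _ ≤ _ := by gcongr
  set M : ℝ := ((a + b : ℕ) : ℝ) with hMd
  have hM0 : 0 < M := by rw [hMd]; positivity
  set T := C * ((a:ℝ) / M) ^ a * ((b:ℝ) / M) ^ b with hT
  have hT0 : 0 ≤ T := by positivity
  have key : T * (2 * Real.pi * (sa * sb)) * (M / E) ^ (a + b) ≤
      E * (sa + sb) * (M / E) ^ (a + b) := by
    refine le_trans (le_of_eq ?_) hprod
    rw [hT, pow_add]
    have q1 : ((a:ℝ) / E) ^ a = (a / M) ^ a * (M / E) ^ a := by
      rw [← mul_pow]; congr 1; field_simp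
    have q2 : ((b:ℝ) / E) ^ b = (b / M) ^ b * (M / E) ^ b := by
      rw [← mul_pow]; congr 1; field_simp
    rw [q1, q2]
    linear_combination (-(C * ((a:ℝ) / M) ^ a * ((b:ℝ) / M) ^ b * (sa * sb) *
      ((M / E) ^ a * (M / E) ^ b))) * hpi
  have key2 := le_of_mul_le_mul_right key (by positivity)
  have hEpi : E ≤ Real.pi := by
    have := Real.exp_one_lt_d9
    have := Real.pi_gt_three
    linarith
  have hx : (1/2 : ℝ) * (1 / sa + 1 / sb) = (sa + sb) / (2 * (sa * sb)) := by
    field_simp; ring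
  rw [hx, le_div_iff₀ (by positivity)]
  have : Real.pi * (T * (2 * (sa * sb))) ≤ Real.pi * (sa + sb) := by
    calc _ = T * (2 * Real.pi * (sa * sb)) := by ring
      _ ≤ _ := key2
      _ ≤ _ := by gcongr
  exact le_of_mul_le_mul_left this Real.pi_pos

lemma binom_sum (m : ℕ) (hm : 0 < m) :
    ∑ k ∈ Finset.range (m + 1), (m.choose k : ℝ) *
      (((k:ℝ) / m) ^ k * (1 - (k:ℝ) / m) ^ (m - k)) ≤ 8 * Real.sqrt m := by
  obtain ⟨n, rfl⟩ : ∃ n, m = n + 1 := ⟨m - 1, by omega⟩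
  rw [Finset.sum_range_succ, Finset.sum_range_succ']
  have hmid : ∀ j ∈ Finset.range n, (((n+1).choose (j+1) : ℕ) : ℝ) *
      ((((j+1 : ℕ):ℝ) / (n+1 : ℕ)) ^ (j+1) *
        (1 - ((j+1 : ℕ):ℝ) / (n+1 : ℕ)) ^ (n + 1 - (j+1))) ≤
      (1/2) * (1 / Real.sqrt ((j+1 : ℕ):ℝ) + 1 / Real.sqrt ((n - 1 - j + 1 : ℕ):ℝ)) := by
    intro j hj
    rw [Finset.mem_range] at hj
    have h := binom_term (j+1) (n - 1 - j + 1) (by omega) (by omega)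
    have e : j + 1 + (n - 1 - j + 1) = n + 1 := by omega
    have e2 : n + 1 - (j + 1) = n - 1 - j + 1 := by omega
    rw [e] at h
    refine le_trans (le_of_eq ?_) h
    rw [e2, ← mul_assoc]
    congr 2
    have : ((n - 1 - j + 1 : ℕ):ℝ) = (n+1 : ℕ) - (j+1 : ℕ) := by
      rw [← e]; push_cast; ring
    rw [this, sub_div, div_self (by positivity)]
  have h1 := Finset.sum_le_sum hmid
  rw [← Finset.mul_sum, Finset.sum_add_distrib,
    Finset.sum_range_reflect (fun j => 1 / Real.sqrt ((j+1 : ℕ):ℝ)) n] at h1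
  have h2 := sum_inv_sqrt n
  have h3 : Real.sqrt n ≤ Real.sqrt ((n+1 : ℕ):ℝ) := Real.sqrt_le_sqrt (by push_cast; linarith)
  have h4 : 1 ≤ Real.sqrt ((n+1 : ℕ):ℝ) := by
    rw [Real.one_le_sqrt]; push_cast; linarith [(Nat.cast_nonneg n : (0:ℝ) ≤ n)]
  have h5 : ((n+1 : ℕ):ℝ) / (n+1 : ℕ) = 1 := div_self (by positivity)
  rw [h5]
  simp only [Nat.choose_self, Nat.choose_zero_right, Nat.sub_self, pow_zero, one_pow, Nat.cast_zero,
    zero_div, sub_zero, Nat.cast_one, mul_one]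
  linarith

lemma binKL_convex (p : ℝ) (hp0 : 0 < p) (hp1 : p < 1) :
    ConvexOn ℝ (Set.Icc (0:ℝ) 1) (fun q => binKL q p) := by
  have h1 : ConvexOn ℝ (Set.Icc (0:ℝ) 1) (fun q : ℝ => q * Real.log q) :=
    Real.convexOn_mul_log.subset (fun x hx => hx.1) (convex_Icc 0 1)
  have h2 : ConvexOn ℝ (Set.Icc (0:ℝ) 1) (fun q : ℝ => (1 - q) * Real.log (1 - q)) := by
    refine ⟨convex_Icc 0 1, fun x hx y hy a b ha hb hab => ?_⟩
    have := h1.2 (x := 1 - x) ⟨by linarith [hx.2], by linarith [hx.1]⟩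
      (y := 1 - y) ⟨by linarith [hy.2], by linarith [hy.1]⟩ ha hb hab
    have e : a • (1 - x) + b • (1 - y) = 1 - (a • x + b • y) := by
      simp only [smul_eq_mul]; linear_combination hab
    simp only [e] at this
    exact this
  have h3 : ConvexOn ℝ (Set.Icc (0:ℝ) 1)
      (fun q : ℝ => q * (-Real.log p) + (1 - q) * (- Real.log (1 - p))) := by
    refine ⟨convex_Icc 0 1, fun x hx y hy a b ha hb hab => le_of_eq ?_⟩
    simp only [smul_eq_mul]
    linear_combination (Real.log (1-p)) * hab
  refine ((h1.add h2).add h3).congr ?_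
  intro q hq
  have l1 : q * Real.log (q / p) = q * Real.log q - q * Real.log p := by
    by_cases h : q = 0
    · simp [h]
    · rw [Real.log_div h hp0.ne']; ring
  have l2 : (1 - q) * Real.log ((1 - q) / (1 - p))
      = (1 - q) * Real.log (1 - q) - (1 - q) * Real.log (1 - p) := by
    by_cases h : 1 - q = 0
    · simp [h]
    · rw [Real.log_div h (by linarith)]; ring
  simp only [binKL, l1, l2, Pi.add_apply]
  ring

lemma expkl_convex (m : ℕ) (p : ℝ) (hp0 : 0 < p) (hp1 : p < 1) :
    ConvexOn ℝ (Set.Icc (0:ℝ) 1) (fun q => Real.exp (m * binKL q p)) := by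
  have h := (binKL_convex p hp0 hp1).smul (c := (m:ℝ)) (by positivity)
  refine ⟨convex_Icc 0 1, fun x hx y hy a b ha hb hab => ?_⟩
  have h1 := h.2 hx hy ha hb hab
  have h2 := convexOn_exp.2 (Set.mem_univ (m * binKL x p)) (Set.mem_univ (m * binKL y p)) ha hb hab
  exact le_trans (Real.exp_le_exp.mpr h1) h2

lemma exp_mul_log_nat (k : ℕ) (y : ℝ) (hy : 0 < k → 0 < y) :
    Real.exp (k * Real.log y) = y ^ k := by
  rcases Nat.eq_zero_or_pos k with rfl | hk
  · simp
  · rw [Real.exp_nat_mul, Real.exp_log (hy hk)]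

lemma expkl_at (m k : ℕ) (hm : 0 < m) (hk : k ≤ m) (p : ℝ) (hp0 : 0 < p) (hp1 : p < 1) :
    p ^ k * (1 - p) ^ (m - k) * Real.exp (m * binKL ((k:ℝ) / m) p)
      = ((k:ℝ) / m) ^ k * (1 - (k:ℝ) / m) ^ (m - k) := by
  have hm' : (0:ℝ) < m := by positivity
  have hp1' : 0 < 1 - p := by linarith
  have hc : ((m - k : ℕ) : ℝ) = m - k := Nat.cast_sub hk
  have e : m * binKL ((k:ℝ) / m) p = k * Real.log ((k:ℝ) / m / p)
      + (m - k : ℕ) * Real.log ((1 - (k:ℝ) / m) / (1 - p)) := by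
    rw [binKL, hc]; field_simp
  rw [e, Real.exp_add, exp_mul_log_nat, exp_mul_log_nat, div_pow _ p, div_pow _ (1 - p)]
  · have := pow_pos hp0 k
    have := pow_pos hp1' (m - k)
    field_simp
  · intro h
    have : (k:ℝ) < m := by exact_mod_cast (by omega : k < m)
    have : (k:ℝ) / m < 1 := by rw [div_lt_one hm']; exact this
    exact div_pos (by linarith) hp1'
  · intro h; positivity

/-- weights of the product Bernoulli law -/
noncomputable def bw {m : ℕ} (x : Fin m → ℝ) (t : Finset (Fin m)) : ℝ :=
  (∏ i ∈ t, x i) * ∏ i ∈ Finset.univ \ t, (1 - x i)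

lemma bw_sum {m : ℕ} (x : Fin m → ℝ) :
    ∑ t ∈ (Finset.univ : Finset (Fin m)).powerset, bw x t = 1 := by
  unfold bw
  rw [← Finset.prod_add]; simp

lemma bw_sum_mem {m : ℕ} (x : Fin m → ℝ) (i : Fin m) :
    ∑ t ∈ (Finset.univ : Finset (Fin m)).powerset, bw x t * (if i ∈ t then 1 else 0) = x i := by
  have h := Finset.prod_add x (fun j => if j = i then 0 else 1 - x j) Finset.univ
  have hl : ∏ j, (x j + (if j = i then 0 else 1 - x j)) = x i := by
    rw [Finset.prod_eq_single i]
    · simp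
    · intro j _ hj; simp [hj]
    · simp
  rw [hl] at h
  rw [h]
  refine Finset.sum_congr rfl fun t _ => ?_
  unfold bw
  split_ifs with hi
  · rw [mul_one]
    congr 1
    refine Finset.prod_congr rfl fun j hj => ?_
    have : j ≠ i := by rintro rfl; simp at hj; exact hj hi
    simp [this]
  · rw [mul_zero, Finset.prod_eq_zero (i := i) (s := Finset.univ \ t) (by simp [hi]) (by simp), mul_zero]

lemma bw_sum_card {m : ℕ} (x : Fin m → ℝ) :
    ∑ t ∈ (Finset.univ : Finset (Fin m)).powerset, bw x t * ((t.card : ℝ) / m) = (∑ i, x i) / m := by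
  simp_rw [← bw_sum_mem x]
  rw [Finset.sum_comm, Finset.sum_div]
  refine Finset.sum_congr rfl fun t _ => ?_
  rw [← Finset.mul_sum]
  simp [mul_div_assoc]

lemma bw_nonneg {m : ℕ} (x : Fin m → ℝ) (hx : ∀ i, x i ∈ Set.Icc (0:ℝ) 1) (t : Finset (Fin m)) :
    0 ≤ bw x t :=
  mul_nonneg (Finset.prod_nonneg fun i _ => (hx i).1)
    (Finset.prod_nonneg fun i _ => by linarith [(hx i).2])

lemma jensen_pt {m : ℕ} (hm : 0 < m) (p : ℝ) (hp0 : 0 < p) (hp1 : p < 1)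
    (x : Fin m → ℝ) (hx : ∀ i, x i ∈ Set.Icc (0:ℝ) 1) :
    Real.exp (m * binKL ((∑ i, x i) / m) p) ≤
      ∑ t ∈ (Finset.univ : Finset (Fin m)).powerset,
        bw x t * Real.exp (m * binKL ((t.card : ℝ) / m) p) := by
  have h := (expkl_convex m p hp0 hp1).map_sum_le
    (t := (Finset.univ : Finset (Fin m)).powerset) (w := bw x)
    (p := fun t => (t.card : ℝ) / m) (fun t _ => bw_nonneg x hx t) (bw_sum x)
    (fun t _ => ⟨by positivity, by
      rw [div_le_one (by positivity)]
      exact_mod_cast (Finset.card_le_univ t).trans_eq (by simp)⟩)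
  simp only [smul_eq_mul, bw_sum_card] at h
  exact h

lemma bw_eq_prod {m : ℕ} (x : Fin m → ℝ) (t : Finset (Fin m)) :
    bw x t = ∏ i, (if i ∈ t then x i else 1 - x i) := by
  unfold bw
  rw [Finset.prod_ite]
  congr 1
  · congr 1; ext; simp
  · congr 1; ext; simp

lemma integral_bw {Z : Type*} [MeasurableSpace Z] {m : ℕ} (D : Measure Z) [IsProbabilityMeasure D]
    (f : Z → ℝ) (hf : Measurable f) (hf01 : ∀ z, f z ∈ Set.Icc (0:ℝ) 1) (t : Finset (Fin m)) :
    ∫ S, bw (fun i => f (S i)) t ∂(Measure.pi (fun _ : Fin m => D))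
      = (∫ z, f z ∂D) ^ t.card * (1 - ∫ z, f z ∂D) ^ (m - t.card) := by
  have hfi : Integrable f D := Integrable.of_bound hf.aestronglyMeasurable 1
    (Filter.Eventually.of_forall fun z => by
      rw [Real.norm_eq_abs, abs_le]; constructor <;> linarith [(hf01 z).1, (hf01 z).2])
  simp_rw [bw_eq_prod]
  rw [integral_fintype_prod_eq_prod (fun i z => if i ∈ t then f z else 1 - f z)]
  have : ∀ i, ∫ z, (if i ∈ t then f z else 1 - f z) ∂D
      = if i ∈ t then ∫ z, f z ∂D else 1 - ∫ z, f z ∂D := by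
    intro i
    split_ifs
    · rfl
    · rw [integral_sub (integrable_const _) hfi]; simp
  simp_rw [this]
  rw [← bw_eq_prod (fun _ => ∫ z, f z ∂D) t]
  unfold bw
  simp [Finset.card_sdiff, Finset.prod_const]

lemma bw_meas {Z : Type*} [MeasurableSpace Z] {m : ℕ}
    (f : Z → ℝ) (hf : Measurable f) (t : Finset (Fin m)) :
    Measurable (fun S : Fin m → Z => bw (fun i => f (S i)) t) := by
  unfold bw
  fun_prop

lemma bw_integrable {Z : Type*} [MeasurableSpace Z] {m : ℕ} (D : Measure Z) [IsProbabilityMeasure D]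
    (f : Z → ℝ) (hf : Measurable f) (hf01 : ∀ z, f z ∈ Set.Icc (0:ℝ) 1) (t : Finset (Fin m)) :
    Integrable (fun S => bw (fun i => f (S i)) t) (Measure.pi (fun _ : Fin m => D)) := by
  refine Integrable.of_bound (bw_meas f hf t).aestronglyMeasurable 1
    (Filter.Eventually.of_forall fun S => ?_)
  have h0 := bw_nonneg (fun i => f (S i)) (fun i => hf01 _)
  rw [Real.norm_eq_abs, abs_of_nonneg (h0 t), ← bw_sum (fun i => f (S i))]
  exact Finset.single_le_sum (f := fun t => bw (fun i => f (S i)) t) (fun t _ => h0 t) (by simp)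

lemma maurer {Z : Type*} [MeasurableSpace Z] {m : ℕ} (hm : 0 < m) (D : Measure Z)
    [IsProbabilityMeasure D]
    (f : Z → ℝ) (hf : Measurable f) (hf01 : ∀ z, f z ∈ Set.Icc (0:ℝ) 1) :
    ∫⁻ S, ENNReal.ofReal (Real.exp (m * binKL ((∑ i, f (S i)) / m) (∫ z, f z ∂D)))
      ∂(Measure.pi (fun _ : Fin m => D)) ≤ ENNReal.ofReal (8 * Real.sqrt m) := by
  have hfi : Integrable f D := Integrable.of_bound hf.aestronglyMeasurable 1
    (Filter.Eventually.of_forall fun z => by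
      rw [Real.norm_eq_abs, abs_le]; constructor <;> linarith [(hf01 z).1, (hf01 z).2])
  have hone : (1:ℝ) ≤ 8 * Real.sqrt m := by
    have : 1 ≤ Real.sqrt m := by rw [Real.one_le_sqrt]; exact_mod_cast hm
    linarith
  have hm' : (m:ℝ) ≠ 0 := by positivity
  set p := ∫ z, f z ∂D with hp
  have hp0 : 0 ≤ p := integral_nonneg fun z => (hf01 z).1
  have hq : ∫ z, (1 - f z) ∂D = 1 - p := by
    rw [integral_sub (integrable_const _) hfi]; simp [hp]
  have hp1 : 0 ≤ 1 - p := by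
    rw [← hq]; exact integral_nonneg fun z => by simpa using (hf01 z).2
  -- degenerate case
  have degen : ∀ c : ℝ, binKL c c = 0 → p = c → (∀ᵐ z ∂D, f z = c) →
      ∫⁻ S, ENNReal.ofReal (Real.exp (m * binKL ((∑ i, f (S i)) / m) p))
      ∂(Measure.pi (fun _ : Fin m => D)) ≤ ENNReal.ofReal (8 * Real.sqrt m) := by
    intro c hc hpc hae
    have hall : ∀ᵐ S ∂(Measure.pi (fun _ : Fin m => D)), ∀ i, f (S i) = c := by
      rw [ae_all_iff]
      intro i
      exact (Measure.quasiMeasurePreserving_eval (fun _ : Fin m => D) i).ae hae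
    calc _ ≤ ∫⁻ S, 1 ∂(Measure.pi (fun _ : Fin m => D)) := by
          refine lintegral_mono_ae ?_
          filter_upwards [hall] with S hS
          have : (∑ i, f (S i)) / m = c := by
            simp only [hS]; simp; field_simp
          rw [this, hpc, hc]; simp
      _ = 1 := by simp
      _ ≤ _ := by rw [← ENNReal.ofReal_one]; exact ENNReal.ofReal_le_ofReal hone
  rcases hp0.eq_or_lt with h0 | h0
  · refine degen 0 (by simp [binKL]) h0.symm ?_
    exact (integral_eq_zero_iff_of_nonneg (fun z => (hf01 z).1) hfi).mp h0.symm
  rcases hp1.eq_or_lt with h1 | h1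
  · refine degen 1 (by simp [binKL]) (by linarith) ?_
    have := (integral_eq_zero_iff_of_nonneg (μ := D) (f := fun z => 1 - f z)
      (fun z => by simpa using (hf01 z).2) ((integrable_const _).sub hfi)).mp (by rw [hq, ← h1])
    filter_upwards [this] with z hz
    simp at hz; linarith
  have h1' : p < 1 := by linarith
  set G : (Fin m → Z) → ℝ := fun S => ∑ t ∈ (Finset.univ : Finset (Fin m)).powerset,
        bw (fun i => f (S i)) t * Real.exp (m * binKL ((t.card : ℝ) / m) p) with hG
  have hGi : Integrable G (Measure.pi (fun _ : Fin m => D)) :=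
    integrable_finsetSum _ fun t _ => (bw_integrable D f hf hf01 t).mul_const _
  have hG0 : ∀ S, 0 ≤ G S := fun S => Finset.sum_nonneg fun t _ =>
    mul_nonneg (bw_nonneg _ (fun i => hf01 _) t) (Real.exp_nonneg _)
  calc _ ≤ ∫⁻ S, ENNReal.ofReal (G S) ∂(Measure.pi (fun _ : Fin m => D)) :=
        lintegral_mono fun S => ENNReal.ofReal_le_ofReal
          (jensen_pt hm p h0 h1' (fun i => f (S i)) fun i => hf01 _)
    _ = ENNReal.ofReal (∫ S, G S ∂(Measure.pi (fun _ : Fin m => D))) :=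
        (ofReal_integral_eq_lintegral_ofReal hGi (Filter.Eventually.of_forall hG0)).symm
    _ ≤ _ := by
        apply ENNReal.ofReal_le_ofReal
        refine le_trans (le_of_eq ?_) (binom_sum m hm)
        rw [hG, integral_finsetSum _ fun t _ => (bw_integrable D f hf hf01 t).mul_const _]
        simp_rw [integral_mul_const, integral_bw D f hf hf01, ← hp]
        rw [Finset.sum_powerset_apply_card
          (fun k => p ^ k * (1 - p) ^ (m - k) * Real.exp (m * binKL ((k:ℝ) / m) p))]
        simp only [Finset.card_univ, Fintype.card_fin, nsmul_eq_mul]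
        refine Finset.sum_congr rfl fun k hk => ?_
        rw [expkl_at m k hm (by rw [Finset.mem_range] at hk; omega) p h0 h1']

lemma empRisk_meas {H Z : Type*} [MeasurableSpace Z] [MeasurableSpace H] {m : ℕ}
    (ℓ : H → Z → ℝ) (hℓ : Measurable (Function.uncurry ℓ)) :
    Measurable (fun q : (Fin m → Z) × H => empRisk ℓ q.2 q.1) := by
  unfold empRisk
  refine Measurable.div_const (Finset.measurable_sum _ fun i _ => ?_) _
  exact hℓ.comp (measurable_snd.prodMk ((measurable_pi_apply i).comp measurable_fst))

lemma trueRisk_meas {H Z : Type*} [MeasurableSpace Z] [MeasurableSpace H]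
    (D : Measure Z) [IsProbabilityMeasure D]
    (ℓ : H → Z → ℝ) (hℓ : Measurable (Function.uncurry ℓ)) :
    Measurable (fun h => trueRisk D ℓ h) :=
  (hℓ.stronglyMeasurable.integral_prod_right (ν := D)).measurable

lemma binKL_meas {A : Type*} [MeasurableSpace A] {f g : A → ℝ} (hf : Measurable f)
    (hg : Measurable g) : Measurable (fun a => binKL (f a) (g a)) := by
  unfold binKL
  fun_prop

lemma empRisk_mem {H Z : Type*} {m : ℕ} (hm : 0 < m)
    (ℓ : H → Z → ℝ) (hℓ01 : ∀ h z, ℓ h z ∈ Set.Icc (0:ℝ) 1) (h : H) (S : Fin m → Z) :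
    empRisk ℓ h S ∈ Set.Icc (0:ℝ) 1 := by
  have hm' : (0:ℝ) < m := by exact_mod_cast hm
  unfold empRisk
  refine ⟨div_nonneg (Finset.sum_nonneg fun i _ => (hℓ01 h (S i)).1) hm'.le, ?_⟩
  rw [div_le_one hm']
  calc _ ≤ ∑ i : Fin m, (1:ℝ) := Finset.sum_le_sum fun i _ => (hℓ01 h (S i)).2
    _ = m := by simp

lemma slice_meas {A B C : Type*} [MeasurableSpace A] [MeasurableSpace B] [MeasurableSpace C]
    (f : A → B → C) (hf : Measurable (fun q : A × B => f q.1 q.2)) (a : A) : Measurable (f a) :=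
  hf.comp measurable_prodMk_left

lemma meas_ofReal_exp {A : Type*} [MeasurableSpace A] (f : A → ℝ) (hf : Measurable f) :
    Measurable (fun a => ENNReal.ofReal (Real.exp (f a))) := by
  fun_prop

/-- **Dziugaite–Roy-type bound for Gibbs posterior and Gibbs data-dependent
prior.**  With the posterior `Q_S ∝ exp(−α·R_S^{ℓ′})` and the data-dependent
prior `P_S ∝ exp(−α′·R_S^{ℓ′})`, with probability at least `1−δ` over
`S′ ∼ D^m`, `S ∼ D^m`, `h′ ∼ P_S` and `h ∼ Q_S`,
`kl(R_S^ℓ(h) ‖ R_D^ℓ(h)) ≤ (1/m)·[α·(R_S^{ℓ′}(h′) − R_S^{ℓ′}(h))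
  + α′·(R_S^{ℓ′}(h) − R_S^{ℓ′}(h′)) + 2α′ + ln(8√m/δ²)]`. -/
theorem dziugaite_roy_gibbs_bound
    {Z H : Type*} [MeasurableSpace Z] [MeasurableSpace H]
    (m : ℕ) (hm : 0 < m)
    (D : Measure Z) [IsProbabilityMeasure D]
    (lam : Measure H) [SigmaFinite lam]
    (ℓ : H → Z → ℝ) (hℓ : Measurable (Function.uncurry ℓ))
    (hℓ01 : ∀ h z, ℓ h z ∈ Set.Icc (0:ℝ) 1)
    (ℓ' : H → Z → ℝ) (hℓ' : Measurable (Function.uncurry ℓ'))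
    (hℓ'01 : ∀ h z, ℓ' h z ∈ Set.Icc (0:ℝ) 1)
    (α α' : ℝ) (hα : 0 ≤ α) (hα' : 0 ≤ α')
    -- normalizers finite and positive
    (hQint : ∀ S : Fin m → Z,
      Integrable (fun g => Real.exp (-(α * empRisk ℓ' g S))) lam)
    (hQpos : ∀ S : Fin m → Z,
      0 < ∫ g, Real.exp (-(α * empRisk ℓ' g S)) ∂lam)
    (hPint : ∀ S : Fin m → Z,
      Integrable (fun g => Real.exp (-(α' * empRisk ℓ' g S))) lam)
    (hPpos : ∀ S : Fin m → Z,
      0 < ∫ g, Real.exp (-(α' * empRisk ℓ' g S)) ∂lam)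
    -- the Gibbs posterior kernel
    (κQ : Kernel (Fin m → Z) H) [IsMarkovKernel κQ]
    (hκQ : ∀ S, κQ S = lam.withDensity fun h =>
      ENNReal.ofReal (Real.exp (-(α * empRisk ℓ' h S)) /
        ∫ g, Real.exp (-(α * empRisk ℓ' g S)) ∂lam))
    -- the Gibbs data-dependent prior kernel
    (κP : Kernel (Fin m → Z) H) [IsMarkovKernel κP]
    (hκP : ∀ S, κP S = lam.withDensity fun h =>
      ENNReal.ofReal (Real.exp (-(α' * empRisk ℓ' h S)) /
        ∫ g, Real.exp (-(α' * empRisk ℓ' g S)) ∂lam))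
    (δ : ℝ) (hδ : δ ∈ Set.Ioc (0:ℝ) 1) :
    1 - ENNReal.ofReal δ ≤
      ((Measure.pi (fun _ : Fin m => D)).prod
          (Measure.pi (fun _ : Fin m => D) ⊗ₘ (κP ×ₖ κQ)))
        {p : (Fin m → Z) × ((Fin m → Z) × (H × H)) |
          binKL (empRisk ℓ p.2.2.2 p.2.1) (trueRisk D ℓ p.2.2.2) ≤
            (1/m) * (α * (empRisk ℓ' p.2.2.1 p.2.1 - empRisk ℓ' p.2.2.2 p.2.1)
              + α' * (empRisk ℓ' p.2.2.2 p.2.1 - empRisk ℓ' p.2.2.1 p.2.1)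
              + 2*α' + Real.log (8 * Real.sqrt m / δ^2)) } := by
  have hm' : (0:ℝ) < m := by exact_mod_cast hm
  set π := Measure.pi (fun _ : Fin m => D) with hπ
  obtain ⟨z0⟩ : Nonempty Z := nonempty_of_isProbabilityMeasure D
  set S0 : Fin m → Z := fun _ => z0
  have hR'm := empRisk_meas (m := m) ℓ' hℓ'
  have hRm := empRisk_meas (m := m) ℓ hℓ
  have hR'mS : ∀ S : Fin m → Z, Measurable (fun h => empRisk ℓ' h S) := fun S =>
    slice_meas (fun (S : Fin m → Z) h => empRisk ℓ' h S) hR'm S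
  have hKm : Measurable (fun q : (Fin m → Z) × H =>
      binKL (empRisk ℓ q.2 q.1) (trueRisk D ℓ q.2)) :=
    binKL_meas hRm ((trueRisk_meas D ℓ hℓ).comp measurable_snd)
  -- the two factors
  obtain ⟨F1, hF1⟩ : ∃ F1 : (Fin m → Z) → H → ENNReal, F1 = fun S h' =>
    ENNReal.ofReal (Real.exp (-(2 * α') + (α' - α) * empRisk ℓ' h' S)) := ⟨_, rfl⟩
  obtain ⟨F2, hF2⟩ : ∃ F2 : (Fin m → Z) → H → ENNReal, F2 = fun S h =>
    ENNReal.ofReal (Real.exp (m * binKL (empRisk ℓ h S) (trueRisk D ℓ h)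
      + (α - α') * empRisk ℓ' h S)) := ⟨_, rfl⟩
  obtain ⟨E, hE⟩ : ∃ E : (Fin m → Z) → H → ENNReal, E = fun S h =>
    ENNReal.ofReal (Real.exp (m * binKL (empRisk ℓ h S) (trueRisk D ℓ h))) := ⟨_, rfl⟩
  have hEm : Measurable (fun q : (Fin m → Z) × H => E q.1 q.2) := by
    subst hE; exact meas_ofReal_exp _ (measurable_const.mul hKm)
  have hF1m : Measurable (fun q : (Fin m → Z) × H => F1 q.1 q.2) := by
    subst hF1
    exact meas_ofReal_exp _ (measurable_const.add (measurable_const.mul hR'm))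
  have hF2m : Measurable (fun q : (Fin m → Z) × H => F2 q.1 q.2) := by
    subst hF2
    exact meas_ofReal_exp _ ((measurable_const.mul hKm).add (measurable_const.mul hR'm))
  have hF1mS : ∀ S, Measurable (F1 S) := slice_meas F1 hF1m
  have hF2mS : ∀ S, Measurable (F2 S) := slice_meas F2 hF2m
  have hEmS : ∀ S, Measurable (E S) := slice_meas E hEm
  set ZQ : (Fin m → Z) → ℝ := fun S => ∫ g, Real.exp (-(α * empRisk ℓ' g S)) ∂lam with hZQ
  set ZP : (Fin m → Z) → ℝ := fun S => ∫ g, Real.exp (-(α' * empRisk ℓ' g S)) ∂lam with hZP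
  have hdm : ∀ (a c : ℝ) (S : Fin m → Z), Measurable (fun h =>
      ENNReal.ofReal (Real.exp (-(a * empRisk ℓ' h S)) / c)) := by
    intro a c S
    have := hR'mS S
    fun_prop
  -- integral of the first factor
  have I1 : ∀ S, ∫⁻ h', F1 S h' ∂(κP S) = ENNReal.ofReal (Real.exp (-(2 * α')) * ZQ S / ZP S) := by
    intro S
    rw [hκP S, lintegral_withDensity_eq_lintegral_mul _ (hdm α' _ S) (hF1mS S)]
    have hi : Integrable (fun g => Real.exp (-(2 * α')) / ZP S *
        Real.exp (-(α * empRisk ℓ' g S))) lam := (hQint S).const_mul _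
    have e : Real.exp (-(2 * α')) * ZQ S / ZP S = ∫ g, Real.exp (-(2 * α')) / ZP S *
        Real.exp (-(α * empRisk ℓ' g S)) ∂lam := by
      rw [integral_const_mul]; simp only [hZQ]; ring
    rw [e, ofReal_integral_eq_lintegral_ofReal hi (Filter.Eventually.of_forall fun g =>
      mul_nonneg (div_nonneg (Real.exp_nonneg _) (hPpos S).le) (Real.exp_nonneg _))]
    refine lintegral_congr fun g => ?_
    simp only [Pi.mul_apply, hF1]
    rw [← ENNReal.ofReal_mul (div_nonneg (Real.exp_nonneg _) (hPpos S).le)]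
    congr 1
    have : Real.exp (-(α' * empRisk ℓ' g S)) *
        Real.exp (-(2 * α') + (α' - α) * empRisk ℓ' g S)
        = Real.exp (-(2 * α')) * Real.exp (-(α * empRisk ℓ' g S)) := by
      rw [← Real.exp_add, ← Real.exp_add]; congr 1; ring
    rw [div_mul_eq_mul_div, this]; ring
  -- comparison of the two normalisers
  have hcmp : ∀ (S T : Fin m → Z) (g : H), Real.exp (-(α' * empRisk ℓ' g S)) ≤
      Real.exp α' * Real.exp (-(α' * empRisk ℓ' g T)) := by
    intro S T g
    rw [← Real.exp_add, Real.exp_le_exp]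
    have h1 := (empRisk_mem hm ℓ' hℓ'01 g S).1
    have h2 := (empRisk_mem hm ℓ' hℓ'01 g T).2
    nlinarith
  have hZcmp : ∀ S, ZP S0 ≤ Real.exp α' * ZP S := by
    intro S
    simp only [hZP]
    rw [← integral_const_mul]
    exact integral_mono (hPint S0) ((hPint S).const_mul _) fun g => hcmp S0 S g
  -- the product of the inner integrals
  have I2 : ∀ S, (∫⁻ h', F1 S h' ∂(κP S)) * ∫⁻ h, F2 S h ∂(κQ S) ≤ ∫⁻ h, E S h ∂(κP S0) := by
    intro S
    rw [I1, hκQ S, hκP S0, lintegral_withDensity_eq_lintegral_mul _ (hdm α _ S) (hF2mS S),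
      lintegral_withDensity_eq_lintegral_mul _ (hdm α' _ S0) (hEmS S),
      ← lintegral_const_mul _ ((hdm α _ S).mul (hF2mS S))]
    refine lintegral_mono fun g => ?_
    simp only [Pi.mul_apply, hF2, hE]
    have hq : 0 < ZQ S := hQpos S
    have hp : 0 < ZP S := hPpos S
    have hp0 : 0 < ZP S0 := hPpos S0
    change _ * (ENNReal.ofReal (_ / ZQ S) * _) ≤ ENNReal.ofReal (_ / ZP S0) * _
    rw [← ENNReal.ofReal_mul (by positivity), ← ENNReal.ofReal_mul (by positivity),
      ← ENNReal.ofReal_mul (by positivity)]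
    apply ENNReal.ofReal_le_ofReal
    set K := Real.exp (m * binKL (empRisk ℓ g S) (trueRisk D ℓ g)) with hK
    have hK0 : 0 < K := Real.exp_pos _
    have e1 : Real.exp (-(α * empRisk ℓ' g S)) *
        Real.exp (m * binKL (empRisk ℓ g S) (trueRisk D ℓ g) + (α - α') * empRisk ℓ' g S)
        = K * Real.exp (-(α' * empRisk ℓ' g S)) := by
      rw [hK, ← Real.exp_add, ← Real.exp_add]; congr 1; ring
    have e2 : Real.exp (-(2 * α')) = (Real.exp α')⁻¹ * (Real.exp α')⁻¹ := by
      rw [← Real.exp_neg, ← Real.exp_add]; congr 1; ring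
    have hx : 0 < Real.exp α' := Real.exp_pos _
    calc _ = Real.exp (-(2 * α')) / ZP S * (Real.exp (-(α * empRisk ℓ' g S)) *
          Real.exp (m * binKL (empRisk ℓ g S) (trueRisk D ℓ g) + (α - α') * empRisk ℓ' g S)) := by
          field_simp
      _ = K * ((Real.exp α')⁻¹ * Real.exp (-(α' * empRisk ℓ' g S))) / (Real.exp α' * ZP S) := by
          rw [e1, e2]; field_simp
      _ ≤ K * Real.exp (-(α' * empRisk ℓ' g S0)) / ZP S0 := by
          have h1 : (Real.exp α')⁻¹ * Real.exp (-(α' * empRisk ℓ' g S)) ≤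
              Real.exp (-(α' * empRisk ℓ' g S0)) := by
            rw [inv_mul_le_iff₀ hx]; exact hcmp S S0 g
          have h2 := hZcmp S
          gcongr
      _ = _ := by ring
  -- total integral
  set F : (Fin m → Z) × (H × H) → ENNReal := fun q => F1 q.1 q.2.1 * F2 q.1 q.2.2 with hF
  have hFm : Measurable F :=
    (hF1m.comp (measurable_fst.prodMk (measurable_fst.comp measurable_snd))).mul
      (hF2m.comp (measurable_fst.prodMk (measurable_snd.comp measurable_snd)))
  have I3 : ∫⁻ q, F q ∂(π ⊗ₘ (κP ×ₖ κQ)) ≤ ENNReal.ofReal (8 * Real.sqrt m) := by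
    rw [Measure.lintegral_compProd hFm]
    calc _ ≤ ∫⁻ S, ∫⁻ h, E S h ∂(κP S0) ∂π := by
          refine lintegral_mono fun S => ?_
          rw [Kernel.prod_apply]
          simp only [hF]
          rw [lintegral_prod_mul (hF1mS S).aemeasurable (hF2mS S).aemeasurable]
          exact I2 S
      _ = ∫⁻ h, ∫⁻ S, E S h ∂π ∂(κP S0) := lintegral_lintegral_swap hEm.aemeasurable
      _ ≤ ∫⁻ h, ENNReal.ofReal (8 * Real.sqrt m) ∂(κP S0) :=
          lintegral_mono fun h => by
            rw [hE]; exact maurer hm D (ℓ h) (slice_meas ℓ hℓ h) (hℓ01 h)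
      _ = _ := by simp
  have hδ0 := hδ.1
  set c : ℝ := 8 * Real.sqrt m / δ ^ 2 with hc
  have hsq : 0 < 8 * Real.sqrt m := by positivity
  have hc0 : 0 < c := by positivity
  set B : Set ((Fin m → Z) × (H × H)) := {q | ENNReal.ofReal c ≤ F q} with hB
  have hBδ : (π ⊗ₘ (κP ×ₖ κQ)) B ≤ ENNReal.ofReal δ := by
    have h1 := (mul_meas_ge_le_lintegral (μ := π ⊗ₘ (κP ×ₖ κQ)) hFm (ENNReal.ofReal c)).trans I3
    have h2 : ENNReal.ofReal c * (π ⊗ₘ (κP ×ₖ κQ)) B ≤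
        ENNReal.ofReal c * ENNReal.ofReal δ := by
      refine h1.trans ?_
      rw [← ENNReal.ofReal_mul hc0.le]
      apply ENNReal.ofReal_le_ofReal
      rw [hc, div_mul_eq_mul_div, le_div_iff₀ (by positivity)]
      have : δ ^ 2 ≤ δ := by nlinarith [hδ.2]
      exact mul_le_mul_of_nonneg_left this hsq.le
    exact (ENNReal.mul_le_mul_iff_right (by simpa using hc0) ENNReal.ofReal_ne_top).mp h2
  set G : Set ((Fin m → Z) × ((Fin m → Z) × (H × H))) := {p |
          binKL (empRisk ℓ p.2.2.2 p.2.1) (trueRisk D ℓ p.2.2.2) ≤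
            (1/m) * (α * (empRisk ℓ' p.2.2.1 p.2.1 - empRisk ℓ' p.2.2.2 p.2.1)
              + α' * (empRisk ℓ' p.2.2.2 p.2.1 - empRisk ℓ' p.2.2.1 p.2.1)
              + 2*α' + Real.log c) } with hG
  have hcov : (Set.univ : Set ((Fin m → Z) × ((Fin m → Z) × (H × H)))) ⊆
      G ∪ (Set.univ ×ˢ B) := by
    rintro ⟨S', S, h', h⟩ -
    by_cases hg : (S', S, h', h) ∈ G
    · exact Or.inl hg
    · right
      refine ⟨Set.mem_univ _, ?_⟩
      simp only [hG, Set.mem_setOf_eq, not_le] at hg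
      simp only [hB, Set.mem_setOf_eq, hF, hF1, hF2]
      rw [← ENNReal.ofReal_mul (Real.exp_nonneg _), ← Real.exp_add]
      apply ENNReal.ofReal_le_ofReal
      rw [← Real.log_le_iff_le_exp hc0]
      rw [one_div, inv_mul_lt_iff₀ hm'] at hg
      linarith
  have hμ : IsProbabilityMeasure (π.prod (π ⊗ₘ (κP ×ₖ κQ))) := inferInstance
  have h1 : (1 : ENNReal) ≤ (π.prod (π ⊗ₘ (κP ×ₖ κQ))) G + ENNReal.ofReal δ := by
    calc (1 : ENNReal) = (π.prod (π ⊗ₘ (κP ×ₖ κQ))) Set.univ := measure_univ.symm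
      _ ≤ (π.prod (π ⊗ₘ (κP ×ₖ κQ))) (G ∪ (Set.univ ×ˢ B)) := measure_mono hcov
      _ ≤ _ := measure_union_le _ _
      _ ≤ _ := by
        gcongr
        rw [Measure.prod_prod, measure_univ, one_mul]
        exact hBδ
  exact tsub_le_iff_right.mpr h1
end

section
/- Recovering uniform-convergence bounds from a parametric function: Let ℓ : H × Z → ℝ be a measurable loss, φ : ℝ² → ℝ measurable, P a prior density on H, δ ∈ (0,1], and suppose Φ_uc : (0,1] → ℝ is a uniform convergence bound, i.e. for every δ′ ∈ (0,1], P_{S∼D^m}[ sup_{h∈H} φ(R_D^ℓ(h), R_S^ℓ(h)) ≤ Φ_uc(δ′) ] ≥ 1−δ′. Then, setting μ(h,S) = −φ(R_D^ℓ(h), R_S^ℓ(h)) − Φ_uc(δ/2) − ln P(h), Theorem 3 applied with this μ yields: with probability at least 1−δ over S ∼ D^m and h′ ∼ P (independent), sup_{f∈H} φ(R_D^ℓ(f), R_S^ℓ(f)) ≤ Φ_uc(δ/2) + ln[(16/δ²)·E_{V∼D^m} E_{g∼P} e^{φ(R_D^ℓ(g), R_V^ℓ(g)) − φ(R_D^ℓ(h′),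 R_S^ℓ(h′))}]. -/
open MeasureTheory ProbabilityTheory

/-- **Recovering uniform-convergence bounds from a parametric function.**
If `Φ_uc` is a uniform convergence bound for the gap `φ`, then (applying the
main theorem with `μ(h,S) = −φ(R_D^ℓ(h), R_S^ℓ(h)) − Φ_uc(δ/2) − ln P(h)`)
with probability at least `1−δ` over `S ∼ D^m` and `h′ ∼ P` independent,
`sup_{f∈H} φ(R_D^ℓ(f), R_S^ℓ(f)) ≤ Φ_uc(δ/2)
  + ln[(16/δ²)·E_{V∼D^m} E_{g∼P} e^{φ(R_D^ℓ(g),R_V^ℓ(g)) − φ(R_D^ℓ(h′),R_S^ℓ(h′))}]`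
(stated in `EReal`, with `sup ≤ c` expressed as `∀ f, … ≤ c`). -/
theorem uniform_convergence_from_parametric_function
    {Z H : Type*} [MeasurableSpace Z] [MeasurableSpace H]
    (m : ℕ) (hm : 0 < m)
    (D : Measure Z) [IsProbabilityMeasure D]
    (lam : Measure H) [SigmaFinite lam]
    (ℓ : H → Z → ℝ) (hℓ : Measurable (Function.uncurry ℓ))
    (φ : ℝ → ℝ → ℝ) (hφ : Measurable (Function.uncurry φ))
    (P : H → ℝ) (hPpos : ∀ h, 0 < P h) (hPmeas : Measurable P)
    (Pm : Measure H) [IsProbabilityMeasure Pm]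
    (hPm : Pm = lam.withDensity fun h => ENNReal.ofReal (P h))
    (δ : ℝ) (hδ : δ ∈ Set.Ioc (0:ℝ) 1)
    -- `Φ_uc` is a uniform convergence bound
    (Φuc : ℝ → ℝ)
    (hΦuc : ∀ δ' ∈ Set.Ioc (0:ℝ) 1,
      1 - ENNReal.ofReal δ' ≤
        (Measure.pi (fun _ : Fin m => D))
          {S : Fin m → Z | ∀ h : H,
            φ (trueRisk D ℓ h) (empRisk ℓ h S) ≤ Φuc δ'})
    -- the Gibbs normalizer of `μ(h,S) = −φ(R_D(h),R_S(h)) − Φ_uc(δ/2) − ln P(h)`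
    -- is finite and positive for each `S`
    (hμint : ∀ S : Fin m → Z, Integrable (fun g =>
      Real.exp (-(-(φ (trueRisk D ℓ g) (empRisk ℓ g S)) - Φuc (δ/2)
        - Real.log (P g)))) lam)
    (hZpos : ∀ S : Fin m → Z, 0 < ∫ g,
      Real.exp (-(-(φ (trueRisk D ℓ g) (empRisk ℓ g S)) - Φuc (δ/2)
        - Real.log (P g))) ∂lam) :
    1 - ENNReal.ofReal δ ≤
      ((Measure.pi (fun _ : Fin m => D)).prod Pm)
        {p : (Fin m → Z) × H | ∀ f : H,
          (φ (trueRisk D ℓ f) (empRisk ℓ f p.1) : EReal) ≤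
            ((Φuc (δ/2) : ℝ) : EReal)
            + ENNReal.log (ENNReal.ofReal (16/δ^2) *
                ∫⁻ V, ∫⁻ g, ENNReal.ofReal
                    (Real.exp (φ (trueRisk D ℓ g) (empRisk ℓ g V)
                      - φ (trueRisk D ℓ p.2) (empRisk ℓ p.2 p.1))) ∂Pm
                  ∂(Measure.pi (fun _ : Fin m => D))) } := by
  set μ : Measure (Fin m → Z) := Measure.pi (fun _ : Fin m => D) with hμ
  obtain ⟨hδ0, hδ1⟩ := hδ
  have hR : Measurable (fun h : H => trueRisk D ℓ h) := by
    unfold trueRisk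
    exact (hℓ.stronglyMeasurable.integral_prod_right').measurable
  have hE : Measurable (fun p : (Fin m → Z) × H => empRisk ℓ p.2 p.1) := by
    unfold empRisk
    refine Measurable.div_const (Finset.measurable_sum _ fun i _ => ?_) _
    exact hℓ.comp (measurable_snd.prodMk ((measurable_pi_apply i).comp measurable_fst))
  have hG : Measurable (fun p : (Fin m → Z) × H =>
      φ (trueRisk D ℓ p.2) (empRisk ℓ p.2 p.1)) :=
    hφ.comp ((hR.comp measurable_snd).prodMk hE)
  set F : (Fin m → Z) × H → ENNReal := fun p =>
    ENNReal.ofReal (Real.exp (φ (trueRisk D ℓ p.2) (empRisk ℓ p.2 p.1))) with hF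
  have hFm : Measurable F := (Real.measurable_exp.comp hG).ennreal_ofReal
  have hFpos : ∀ p, F p ≠ 0 := fun p => by
    simp only [hF, ne_eq, ENNReal.ofReal_eq_zero, not_le]
    exact Real.exp_pos _
  have hFtop : ∀ p, F p ≠ ⊤ := fun p => ENNReal.ofReal_ne_top
  set I : ENNReal := ∫⁻ p, F p ∂(μ.prod Pm) with hI
  have hI' : ∫⁻ V, ∫⁻ g, F (V, g) ∂Pm ∂μ = I := (lintegral_prod _ hFm.aemeasurable).symm
  have hI0 : I ≠ 0 := by
    intro h0
    rw [hI, lintegral_eq_zero_iff hFm] at h0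
    have h1 : ∀ᵐ p ∂(μ.prod Pm), False := by
      filter_upwards [h0] with p hp using hFpos p hp
    obtain ⟨p, hp⟩ := h1.exists
    exact hp
  set c : ENNReal := ENNReal.ofReal (16 / δ ^ 2) with hc
  have hcpos : 0 < 16 / δ ^ 2 := by positivity
  have hc0 : c ≠ 0 := by simpa [hc] using hcpos
  have hctop : c ≠ ⊤ := ENNReal.ofReal_ne_top
  -- inner integral
  have hint : ∀ p : (Fin m → Z) × H, (∫⁻ V, ∫⁻ g, ENNReal.ofReal
        (Real.exp (φ (trueRisk D ℓ g) (empRisk ℓ g V)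
          - φ (trueRisk D ℓ p.2) (empRisk ℓ p.2 p.1))) ∂Pm ∂μ) = (F p)⁻¹ * I := by
    intro p
    rw [← hI']
    have hne : (F p)⁻¹ ≠ ⊤ := ENNReal.inv_ne_top.2 (hFpos p)
    rw [← lintegral_const_mul' _ _ hne]
    refine lintegral_congr fun V => ?_
    rw [← lintegral_const_mul' _ _ hne]
    refine lintegral_congr fun g => ?_
    simp only [hF]
    rw [← ENNReal.ofReal_inv_of_pos (Real.exp_pos _),
      ← ENNReal.ofReal_mul (inv_nonneg.2 (Real.exp_pos _).le), Real.exp_sub, div_eq_inv_mul]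
  -- Markov
  have hbad : (μ.prod Pm) {p | c * I ≤ F p} ≤ ENNReal.ofReal (δ / 2) := by
    by_cases hIt : I = ⊤
    · have : {p | c * I ≤ F p} = ∅ := by
        ext p
        simp [hIt, ENNReal.mul_top hc0, hFtop p]
      rw [this]
      simp
    · have h1 := mul_meas_ge_le_lintegral (μ := μ.prod Pm) hFm (c * I)
      rw [← hI] at h1
      have h2 : (c * (μ.prod Pm) {p | c * I ≤ F p}) * I ≤ 1 * I := by
        rw [one_mul]
        calc _ = c * I * (μ.prod Pm) {p | c * I ≤ F p} := by ring
          _ ≤ I := h1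
      have h3 := (ENNReal.mul_le_mul_iff_left hI0 hIt).1 h2
      have h4 : (μ.prod Pm) {p | c * I ≤ F p} ≤ c⁻¹ := by
        rw [ENNReal.le_inv_iff_mul_le, mul_comm]
        exact h3
      refine h4.trans ?_
      rw [hc, ← ENNReal.ofReal_inv_of_pos hcpos]
      apply ENNReal.ofReal_le_ofReal
      rw [inv_div]
      nlinarith
  have hA := hΦuc (δ / 2) ⟨by linarith, by linarith⟩
  set A : Set (Fin m → Z) := {S | ∀ h : H,
            φ (trueRisk D ℓ h) (empRisk ℓ h S) ≤ Φuc (δ / 2)} with hAdef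
  have hA2 : (μ.prod Pm) (A ×ˢ Set.univ) = μ A := by
    rw [Measure.prod_prod, measure_univ, mul_one]
  rw [← hA2] at hA
  simp_rw [hint]
  refine le_trans ?_ (tsub_le_iff_right.2 (?_ : (μ.prod Pm) (A ×ˢ Set.univ) ≤
    _ + ENNReal.ofReal (δ / 2)))
  · have h2 : ENNReal.ofReal δ = ENNReal.ofReal (δ / 2) + ENNReal.ofReal (δ / 2) := by
      rw [← ENNReal.ofReal_add (by linarith) (by linarith)]
      congr 1
      ring
    rw [h2, ← tsub_tsub]
    exact tsub_le_tsub_right hA _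
  · refine le_trans (le_trans (measure_mono ?_) (measure_union_le _ {p | c * I ≤ F p}))
      (add_le_add_right hbad _)
    rintro p ⟨hp, -⟩
    by_cases hb : c * I ≤ F p
    · exact Or.inr hb
    · left
      intro f
      have h1 : (1 : ENNReal) ≤ c * ((F p)⁻¹ * I) := by
        calc (1 : ENNReal) = (F p)⁻¹ * F p := (ENNReal.inv_mul_cancel (hFpos p) (hFtop p)).symm
          _ ≤ (F p)⁻¹ * (c * I) := by gcongr; exact (not_le.1 hb).le
          _ = _ := by ring
      have h2 : (0 : EReal) ≤ ENNReal.log (c * ((F p)⁻¹ * I)) := by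
        rw [← ENNReal.log_one]
        exact ENNReal.log_monotone h1
      calc (φ (trueRisk D ℓ f) (empRisk ℓ f p.1) : EReal)
          ≤ ((Φuc (δ/2) : ℝ) : EReal) := EReal.coe_le_coe_iff.2 (hp f)
        _ = ((Φuc (δ/2) : ℝ) : EReal) + 0 := (add_zero _).symm
        _ ≤ _ := add_le_add le_rfl h2
end

section
/- Recovering algorithmic-dependent bounds from a parametric function: Let ℓ : H × Z → ℝ be a measurable loss, φ : ℝ² → ℝ measurable, P a prior density on H, S ↦ h_S a measurable learning algorithm from Z^m to H, δ ∈ (0,1], and suppose Φ_a : (0,1] → ℝ is an algorithmic-dependent generalization bound, i.e. for every δ′ ∈ (0,1], P_{S∼D^m}[ φ(R_D^ℓ(h_S), R_S^ℓ(h_S)) ≤ Φ_a(δ′) ] ≥ 1−δ′. Then, setting μ(h,S) = −φ(R_D^ℓ(h), R_S^ℓ(h)) − Φ_a(δ/2) − ln P(h), Theorem 3 applied with this μ yields: with probability at least 1−δ over S ∼ D^m and h′ ∼ P (independent), φ(R_D^ℓ(h_S), R_S^ℓ(h_S)) ≤ Φ_a(δ/2) + ln[(16/δ²)·E_{V∼D^m}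 E_{g∼P} e^{φ(R_D^ℓ(g), R_V^ℓ(g)) − φ(R_D^ℓ(h′), R_S^ℓ(h′))}]. -/
open MeasureTheory ProbabilityTheory

/-- **Recovering algorithmic-dependent bounds from a parametric function.**
If `Φ_a` is an algorithmic-dependent generalization bound for the algorithm
`S ↦ h_S`, then (applying the main theorem with
`μ(h,S) = −φ(R_D^ℓ(h), R_S^ℓ(h)) − Φ_a(δ/2) − ln P(h)`) with probability at
least `1−δ` over `S ∼ D^m` and `h′ ∼ P` independent,
`φ(R_D^ℓ(h_S), R_S^ℓ(h_S)) ≤ Φ_a(δ/2)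
  + ln[(16/δ²)·E_{V∼D^m} E_{g∼P} e^{φ(R_D^ℓ(g),R_V^ℓ(g)) − φ(R_D^ℓ(h′),R_S^ℓ(h′))}]`
(stated in `EReal`). -/
theorem algorithmic_bound_from_parametric_function
    {Z H : Type*} [MeasurableSpace Z] [MeasurableSpace H]
    (m : ℕ) (hm : 0 < m)
    (D : Measure Z) [IsProbabilityMeasure D]
    (lam : Measure H) [SigmaFinite lam]
    (ℓ : H → Z → ℝ) (hℓ : Measurable (Function.uncurry ℓ))
    (φ : ℝ → ℝ → ℝ) (hφ : Measurable (Function.uncurry φ))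
    (P : H → ℝ) (hPpos : ∀ h, 0 < P h) (hPmeas : Measurable P)
    (Pm : Measure H) [IsProbabilityMeasure Pm]
    (hPm : Pm = lam.withDensity fun h => ENNReal.ofReal (P h))
    -- the learning algorithm
    (A : (Fin m → Z) → H) (hA : Measurable A)
    (δ : ℝ) (hδ : δ ∈ Set.Ioc (0:ℝ) 1)
    -- `Φ_a` is an algorithmic-dependent generalization bound
    (Φa : ℝ → ℝ)
    (hΦa : ∀ δ' ∈ Set.Ioc (0:ℝ) 1,
      1 - ENNReal.ofReal δ' ≤
        (Measure.pi (fun _ : Fin m => D))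
          {S : Fin m → Z |
            φ (trueRisk D ℓ (A S)) (empRisk ℓ (A S) S) ≤ Φa δ'})
    -- the Gibbs normalizer of `μ(h,S) = −φ(R_D(h),R_S(h)) − Φ_a(δ/2) − ln P(h)`
    -- is finite and positive for each `S`
    (hμint : ∀ S : Fin m → Z, Integrable (fun g =>
      Real.exp (-(-(φ (trueRisk D ℓ g) (empRisk ℓ g S)) - Φa (δ/2)
        - Real.log (P g)))) lam)
    (hZpos : ∀ S : Fin m → Z, 0 < ∫ g,
      Real.exp (-(-(φ (trueRisk D ℓ g) (empRisk ℓ g S)) - Φa (δ/2)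
        - Real.log (P g))) ∂lam) :
    1 - ENNReal.ofReal δ ≤
      ((Measure.pi (fun _ : Fin m => D)).prod Pm)
        {p : (Fin m → Z) × H |
          (φ (trueRisk D ℓ (A p.1)) (empRisk ℓ (A p.1) p.1) : EReal) ≤
            ((Φa (δ/2) : ℝ) : EReal)
            + ENNReal.log (ENNReal.ofReal (16/δ^2) *
                ∫⁻ V, ∫⁻ g, ENNReal.ofReal
                    (Real.exp (φ (trueRisk D ℓ g) (empRisk ℓ g V)
                      - φ (trueRisk D ℓ p.2) (empRisk ℓ p.2 p.1))) ∂Pm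
                  ∂(Measure.pi (fun _ : Fin m => D))) } := by
  set μ : Measure (Fin m → Z) := Measure.pi (fun _ : Fin m => D) with hμ
  obtain ⟨hδ0, hδ1⟩ := hδ
  have hT : Measurable (trueRisk D ℓ) := by
    have := (hℓ.stronglyMeasurable.integral_prod_right (ν := D)).measurable
    exact this
  have hE : Measurable (fun p : (Fin m → Z) × H => empRisk ℓ p.2 p.1) := by
    unfold empRisk
    refine Measurable.div_const (Finset.measurable_sum _ fun i _ => ?_) _
    exact hℓ.comp (measurable_snd.prodMk ((measurable_pi_apply i).comp measurable_fst))
  set f : (Fin m → Z) × H → ℝ := fun p => φ (trueRisk D ℓ p.2) (empRisk ℓ p.2 p.1) with hf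
  have hfm : Measurable f := hφ.comp ((hT.comp measurable_snd).prodMk hE)
  set F : (Fin m → Z) × H → ENNReal := fun p => ENNReal.ofReal (Real.exp (f p)) with hF
  have hFm : Measurable F := (Real.measurable_exp.comp hfm).ennreal_ofReal
  set I : ENNReal := ∫⁻ p, F p ∂(μ.prod Pm) with hI
  have hIeq : I = ∫⁻ V, ∫⁻ g, F (V, g) ∂Pm ∂μ := lintegral_prod _ hFm.aemeasurable
  have hI0 : I ≠ 0 := by
    intro h0
    rw [hI, lintegral_eq_zero_iff hFm] at h0
    have : ∀ᵐ p ∂(μ.prod Pm), False := by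
      filter_upwards [h0] with p hp
      have : 0 < F p := ENNReal.ofReal_pos.2 (Real.exp_pos _)
      exact this.ne' hp
    rw [Filter.eventually_false_iff_eq_bot, ae_eq_bot] at this
    exact IsProbabilityMeasure.ne_zero (μ.prod Pm) this
  set C : ENNReal := ENNReal.ofReal (16/δ^2) with hC
  have hCpos : (0:ℝ) < 16/δ^2 := by positivity
  have hC0 : C ≠ 0 := (ENNReal.ofReal_pos.2 hCpos).ne'
  set G1 : Set ((Fin m → Z) × H) := {p | f (p.1, A p.1) ≤ Φa (δ/2)} with hG1
  set G2 : Set ((Fin m → Z) × H) := {p | F p ≤ C * I} with hG2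
  have hG1m' : MeasurableSet {S : Fin m → Z | f (S, A S) ≤ Φa (δ/2)} :=
    measurableSet_le (hfm.comp (measurable_id.prodMk hA)) measurable_const
  have hG1m : MeasurableSet G1 := measurable_fst hG1m'
  have hG2m : MeasurableSet G2 := measurableSet_le hFm measurable_const
  have hb1 : (μ.prod Pm) G1ᶜ ≤ ENNReal.ofReal (δ/2) := by
    have h1 := hΦa (δ/2) ⟨by linarith, by linarith⟩
    have h2 : (μ.prod Pm) G1 = μ {S : Fin m → Z | f (S, A S) ≤ Φa (δ/2)} := by
      have : G1 = {S : Fin m → Z | f (S, A S) ≤ Φa (δ/2)} ×ˢ Set.univ := by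
        ext p; simp [hG1]
      rw [this, Measure.prod_prod, measure_univ, mul_one]
    rw [prob_compl_eq_one_sub hG1m, h2]
    exact tsub_le_iff_tsub_le.1 h1
  have hb2 : (μ.prod Pm) G2ᶜ ≤ ENNReal.ofReal (δ/2) := by
    by_cases hIt : I = ⊤
    · have : G2ᶜ = ∅ := by
        rw [Set.compl_empty_iff, Set.eq_univ_iff_forall]
        intro p
        simp [hG2, hIt, ENNReal.mul_top hC0]
      rw [this]; simp
    · have hM := mul_meas_ge_le_lintegral (μ := μ.prod Pm) hFm (C * I)
      have hsub : (μ.prod Pm) G2ᶜ ≤ (μ.prod Pm) {p | C * I ≤ F p} := by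
        refine measure_mono fun p hp => ?_
        simp only [hG2, Set.mem_compl_iff, Set.mem_setOf_eq, not_le] at hp
        exact hp.le
      refine hsub.trans ?_
      set x := (μ.prod Pm) {p | C * I ≤ F p}
      have h3 : I * (C * x) ≤ I * 1 := by
        rw [mul_one]; calc I * (C * x) = C * I * x := by ring
          _ ≤ I := hM
      have h4 : C * x ≤ 1 := (ENNReal.mul_le_mul_iff_right hI0 hIt).1 h3
      have h5 : x ≤ C⁻¹ := by
        rw [ENNReal.le_inv_iff_mul_le, mul_comm]; exact h4
      refine h5.trans ?_
      rw [hC, ← ENNReal.ofReal_inv_of_pos hCpos]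
      apply ENNReal.ofReal_le_ofReal
      rw [inv_div]
      nlinarith
  have hb : (μ.prod Pm) (G1 ∩ G2)ᶜ ≤ ENNReal.ofReal δ := by
    rw [Set.compl_inter]
    refine (measure_union_le _ _).trans ((add_le_add hb1 hb2).trans ?_)
    rw [← ENNReal.ofReal_add (by linarith) (by linarith)]
    simp
  have hfin : 1 - ENNReal.ofReal δ ≤ (μ.prod Pm) (G1 ∩ G2) := by
    rw [prob_compl_eq_one_sub (hG1m.inter hG2m)] at hb
    exact tsub_le_iff_tsub_le.1 hb
  refine hfin.trans (measure_mono ?_)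
  rintro p ⟨hp1, hp2⟩
  have key : ∫⁻ V, ∫⁻ g, ENNReal.ofReal (Real.exp (φ (trueRisk D ℓ g) (empRisk ℓ g V)
      - φ (trueRisk D ℓ p.2) (empRisk ℓ p.2 p.1))) ∂Pm ∂μ
      = I * ENNReal.ofReal (Real.exp (-(f p))) := by
    rw [hIeq, ← lintegral_mul_const' _ _ ENNReal.ofReal_ne_top]
    refine lintegral_congr fun V => ?_
    rw [← lintegral_mul_const' _ _ ENNReal.ofReal_ne_top]
    refine lintegral_congr fun g => ?_
    rw [hF, ← ENNReal.ofReal_mul (Real.exp_pos _).le, ← Real.exp_add, ← sub_eq_add_neg]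
  have h1 : (1:ENNReal) ≤ C * (I * ENNReal.ofReal (Real.exp (-(f p)))) := by
    calc (1:ENNReal) = F p * ENNReal.ofReal (Real.exp (-(f p))) := by
          rw [hF, ← ENNReal.ofReal_mul (Real.exp_pos _).le, ← Real.exp_add]; simp
      _ ≤ (C * I) * ENNReal.ofReal (Real.exp (-(f p))) := by gcongr; exact hp2
      _ = _ := by ring
  have h0 : (0:EReal) ≤ ENNReal.log (C * (I * ENNReal.ofReal (Real.exp (-(f p))))) := by
    rw [← ENNReal.log_one]; exact ENNReal.log_monotone h1
  rw [Set.mem_setOf_eq, key]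
  have hp1' : ((f (p.1, A p.1) : ℝ) : EReal) ≤ ((Φa (δ/2) : ℝ) : EReal) :=
    EReal.coe_le_coe_iff.2 hp1
  calc ((f (p.1, A p.1) : ℝ) : EReal) = (f (p.1, A p.1) : EReal) + 0 := (add_zero _).symm
    _ ≤ _ := add_le_add hp1' h0
end
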